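/- arXiv:2511.07100 — 2 statements merged into one kernel-verified Lean document; each statement's English description precedes it below -/
import Mathlib

section
/- Let (n_j) be strictly increasing positive reals tending to infinity and a_j > 0 with ∑_{n_j ≤ x} a_j = ρx + O(x/(log x)^{3/2+ε}) for some ρ > 0, ε > 0. Then lim_{T→∞, N→∞, (log N)² = o(T)} (1/T) ∫_0^T |∑_{n_j ≤ N} a_j n_j^{−1−it}|² dt = ∑_{j=1}^∞ a_j²/n_j². -/
/-!
Write `cⱼ = aⱼ / nⱼ` and `lⱼ = log nⱼ`. Expanding the square and integrating, the mean square equals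
`∑_{j,k} cⱼ cₖ K(lⱼ - lₖ)` over indices with `nⱼ, nₖ ≤ N`, where `K(u) = (1/T) ∫₀ᵀ cos (t u) dt`
satisfies `K(0) = 1` and `|K(u)| ≤ min (1, 1/(T|u|))`. The diagonal gives `∑ cⱼ²`. Since all `cⱼ`
are positive, absolute values suffice off the diagonal, so take `k < j` and put `δ = T^(-1/2)`,
`B = ∑_{nⱼ ≤ N} cⱼ`.

* Far pairs, `lⱼ - lₖ ≥ 1`, have `|K| ≤ 1/T` and contribute at most `B²/T`.
* Middle pairs, `δ ≤ lⱼ - lₖ < 1`, have `|K| ≤ 1/(Tδ) = δ`, and the mass within logarithmic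
  distance `1` is bounded, so they contribute `O(δ B)`.
* Near pairs, `lⱼ - lₖ < δ`: by the counting hypothesis the near mass is at most `C δ + Dⱼ` with
  `Dⱼ` of order `(log nⱼ)^(-3/2-ε)` (`exists_near_bound`). The part `C δ` contributes `O(δ B)`. The
  excess over `C δ` is dominated by `Dⱼ`, and it vanishes for fixed `j` once `δ` is small, so its
  weighted sum tends to `0` by dominated convergence (`tendsto_near_excess`), provided
  `∑ cⱼ Dⱼ` converges.

The mass of `c` on each block `m - 1 < lⱼ ≤ m` is bounded (`exists_block_bound`). Summing over
blocks gives `B = O(log N)`, hence `B / √T → 0`, and the convergence of `∑ cⱼ Dⱼ`, as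
`3/2 + ε > 1`. Finally `cⱼ ≤ Dⱼ`, because the near mass bound includes the atom at `j`, so
`∑ cⱼ²` converges. The estimates are combined in `tendsto_mean_square`.
-/

open Filter Asymptotics

/-! ### The averaged cosine kernel -/

open Finset in
theorem sum_range_symm (F : ℕ → ℕ → ℝ) (hF : ∀ j k, F j k = F k j) (M : ℕ) :
    ∑ j ∈ range M, ∑ k ∈ range M, F j k
      = ∑ j ∈ range M, F j j + 2 * ∑ j ∈ range M, ∑ k ∈ range j, F j k := by
  induction M with
  | zero => simp
  | succ M ih =>
    simp only [sum_range_succ _ M, sum_add_distrib, ih]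
    rw [sum_congr rfl (fun k _ => hF k M)]
    ring

/-- The averaged kernel `(1/T) ∫₀ᵀ cos (t u) dt`. -/
noncomputable def avgCos (T u : ℝ) : ℝ := (1 / T) * ∫ t in (0:ℝ)..T, Real.cos (t * u)

theorem avgCos_zero {T : ℝ} (hT : 0 < T) : avgCos T 0 = 1 := by
  simp [avgCos, hT.ne']

theorem avgCos_neg (T u : ℝ) : avgCos T (-u) = avgCos T u := by
  simp [avgCos]

theorem abs_avgCos_le_one {T : ℝ} (hT : 0 < T) (u : ℝ) : |avgCos T u| ≤ 1 := by
  have h : ‖∫ t in (0:ℝ)..T, Real.cos (t * u)‖ ≤ 1 * |T - 0| :=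
    intervalIntegral.norm_integral_le_of_norm_le_const (fun t _ => Real.abs_cos_le_one _)
  rw [sub_zero, abs_of_pos hT, one_mul, Real.norm_eq_abs] at h
  rw [avgCos, abs_mul, abs_of_pos (by positivity : 0 < 1 / T), one_div, inv_mul_le_iff₀ hT]
  simpa using h

theorem abs_avgCos_le {T u : ℝ} (hT : 0 < T) (hu : 0 < u) : |avgCos T u| ≤ 1 / (T * u) := by
  have h : ∫ t in (0:ℝ)..T, Real.cos (t * u) = u⁻¹ * Real.sin (T * u) := by
    rw [intervalIntegral.integral_comp_mul_right _ hu.ne']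
    simp
  rw [avgCos, h, abs_mul, abs_mul, abs_of_pos (by positivity : 0 < 1 / T),
    abs_of_pos (inv_pos.2 hu)]
  calc 1 / T * (u⁻¹ * |Real.sin (T * u)|) ≤ 1 / T * (u⁻¹ * 1) := by
        gcongr; exact Real.abs_sin_le_one _
    _ = 1 / (T * u) := by field_simp

/-- Three-range bound for the kernel: near (`u < δ`), middle (`u < 1`) and far.
The condition `1 / (T δ) = δ` says `δ = T^(-1/2)`. -/
theorem abs_avgCos_le_three {T u δ : ℝ} (hT : 0 < T) (hδ : 0 < δ) (hTδ : 1 / (T * δ) = δ)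
    (hu : 0 < u) :
    |avgCos T u| ≤ (if u < δ then 1 else 0) + δ * (if u < 1 then 1 else 0) + 1 / T := by
  have h1 := abs_avgCos_le_one hT u
  have h2 := abs_avgCos_le hT hu
  have h3 : 0 < 1 / T := by positivity
  by_cases hd : u < δ
  · rw [if_pos hd]; split_ifs <;> linarith
  · rw [if_neg hd]
    push Not at hd
    by_cases h' : u < 1
    · rw [if_pos h']
      have : 1 / (T * u) ≤ 1 / (T * δ) := by gcongr
      linarith
    · rw [if_neg h']
      push Not at h'
      have : 1 / (T * u) ≤ 1 / T := by
        apply one_div_le_one_div_of_le hT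
        nlinarith
      linarith

theorem normSq_sum_eq (c l : ℕ → ℝ) (M : ℕ) (t : ℝ) :
    ‖∑ j ∈ Finset.range M, (c j : ℂ) * Complex.exp (((-(t * l j) : ℝ) : ℂ) * Complex.I)‖ ^ 2
      = ∑ j ∈ Finset.range M, ∑ k ∈ Finset.range M, c j * c k * Real.cos (t * (l j - l k)) := by
  rw [← Complex.normSq_eq_norm_sq, Complex.normSq_apply]
  simp only [Complex.re_sum, Complex.im_sum, Complex.re_ofReal_mul, Complex.im_ofReal_mul,
    Complex.exp_ofReal_mul_I_re, Complex.exp_ofReal_mul_I_im, Real.cos_neg, Real.sin_neg,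
    Finset.sum_mul_sum, ← Finset.sum_add_distrib]
  refine Finset.sum_congr rfl fun j _ => Finset.sum_congr rfl fun k _ => ?_
  rw [mul_sub, Real.cos_sub]
  ring

theorem mean_square_eq (c l : ℕ → ℝ) (M : ℕ) (T : ℝ) :
    (1 / T) * ∫ t in (0:ℝ)..T,
      ‖∑ j ∈ Finset.range M, (c j : ℂ) * Complex.exp (((-(t * l j) : ℝ) : ℂ) * Complex.I)‖ ^ 2
      = ∑ j ∈ Finset.range M, ∑ k ∈ Finset.range M, c j * c k * avgCos T (l j - l k) := by
  simp only [normSq_sum_eq]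
  rw [intervalIntegral.integral_finsetSum]
  · rw [Finset.mul_sum]
    refine Finset.sum_congr rfl fun j _ => ?_
    rw [intervalIntegral.integral_finsetSum]
    · rw [Finset.mul_sum]
      refine Finset.sum_congr rfl fun k _ => ?_
      rw [intervalIntegral.integral_const_mul, avgCos]
      ring
    · intro k _
      exact (by fun_prop : Continuous _).intervalIntegrable _ _
  · intro j _
    exact (by fun_prop : Continuous _).intervalIntegrable _ _

/-! ### Off-diagonal terms -/

/-- Mass strictly below index `j` at distance `l j - l k < δ`; the atom at `j` itself is
left out. -/
noncomputable def nearMass (c l : ℕ → ℝ) (δ : ℝ) (j : ℕ) : ℝ :=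
  ∑ k ∈ Finset.range j, if l j - l k < δ then c k else 0

/-- The off-diagonal terms split into the near excess, terms of size `δ B` and the far part
`B² / T = (δ B)²`, where `B` is the total mass of `c` on the range. -/
theorem mean_square_sub_diag_le {c l : ℕ → ℝ} (hc : ∀ j, 0 ≤ c j) (hl : StrictMono l)
    {T δ C C' : ℝ} (hT : 0 < T) (hδ : 0 < δ) (hTδ : 1 / (T * δ) = δ)
    (hC' : ∀ j, nearMass c l 1 j ≤ C') (M : ℕ) :
    |∑ j ∈ Finset.range M, ∑ k ∈ Finset.range M, c j * c k * avgCos T (l j - l k)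
        - ∑ j ∈ Finset.range M, c j ^ 2|
      ≤ 2 * (∑ j ∈ Finset.range M, c j * max (nearMass c l δ j - C * δ) 0
          + (C + C') * (δ * ∑ j ∈ Finset.range M, c j) + (δ * ∑ j ∈ Finset.range M, c j) ^ 2) := by
  set B := ∑ j ∈ Finset.range M, c j with hB
  have hTδ' : 1 / T = δ ^ 2 := by
    have := hTδ
    field_simp at this ⊢
    linarith
  rw [sum_range_symm (fun j k => c j * c k * avgCos T (l j - l k))]
  swap
  · intro j k
    rw [← avgCos_neg, neg_sub]
    ring
  have hdiag : ∑ j ∈ Finset.range M, c j * c j * avgCos T (l j - l j)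
      = ∑ j ∈ Finset.range M, c j ^ 2 := by
    refine Finset.sum_congr rfl fun j _ => ?_
    rw [sub_self, avgCos_zero hT]; ring
  rw [hdiag, add_sub_cancel_left, abs_mul, abs_two]
  gcongr
  have inner : ∀ j ∈ Finset.range M, |∑ k ∈ Finset.range j, c j * c k * avgCos T (l j - l k)|
      ≤ c j * max (nearMass c l δ j - C * δ) 0 + (C + C') * δ * c j + δ ^ 2 * B * c j := by
    intro j hj
    have hsub : ∑ k ∈ Finset.range j, c k ≤ B :=
      Finset.sum_le_sum_of_subset_of_nonneg
        (Finset.range_subset_range.2 (Finset.mem_range.1 hj).le) (fun k _ _ => hc k)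
    have h1 : |∑ k ∈ Finset.range j, c j * c k * avgCos T (l j - l k)|
        ≤ c j * (nearMass c l δ j + δ * nearMass c l 1 j + δ ^ 2 * ∑ k ∈ Finset.range j, c k) := by
      refine (Finset.abs_sum_le_sum_abs _ _).trans ?_
      simp only [nearMass, Finset.mul_sum, ← Finset.sum_add_distrib]
      refine Finset.sum_le_sum fun k hk => ?_
      have hu : 0 < l j - l k := sub_pos.2 (hl (Finset.mem_range.1 hk))
      rw [abs_mul, abs_of_nonneg (mul_nonneg (hc j) (hc k)), mul_assoc]
      refine mul_le_mul_of_nonneg_left ?_ (hc j)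
      refine (mul_le_mul_of_nonneg_left (abs_avgCos_le_three hT hδ hTδ hu) (hc k)).trans
        (le_of_eq ?_)
      rw [hTδ']
      split_ifs <;> ring
    refine h1.trans ?_
    have h2 : nearMass c l δ j ≤ max (nearMass c l δ j - C * δ) 0 + C * δ := by
      linarith [le_max_left (nearMass c l δ j - C * δ) 0]
    have h3 : δ * nearMass c l 1 j ≤ δ * C' := by gcongr; exact hC' j
    have h4 : δ ^ 2 * ∑ k ∈ Finset.range j, c k ≤ δ ^ 2 * B := by gcongr
    calc _ ≤ c j * ((max (nearMass c l δ j - C * δ) 0 + C * δ) + δ * C' + δ ^ 2 * B) :=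
          mul_le_mul_of_nonneg_left (by linarith) (hc j)
      _ = _ := by ring
  refine (Finset.abs_sum_le_sum_abs _ _).trans ((Finset.sum_le_sum inner).trans (le_of_eq ?_))
  rw [Finset.sum_add_distrib, Finset.sum_add_distrib, ← Finset.mul_sum, ← Finset.mul_sum, ← hB]
  ring

open Topology in
/-- The excess of the near mass over `C δ` is negligible after summation against `c`: for each `j`
it vanishes once `δ` is small, and the bound `D` allows dominated convergence. -/
theorem tendsto_near_excess {c l D : ℕ → ℝ} (hc : ∀ j, 0 ≤ c j) (hl : StrictMono l) {C : ℝ}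
    (hC : 0 ≤ C) (hD : ∀ j, 0 ≤ D j)
    (hnear : ∀ j δ, 0 < δ → δ ≤ 1 → nearMass c l δ j ≤ C * δ + D j)
    (hs : Summable fun j => c j * D j) :
    Tendsto (fun δ : ℝ => ∑' j, c j * max (nearMass c l δ j - C * δ) 0) (𝓝[>] 0) (𝓝 0) := by
  have key : Tendsto (fun δ : ℝ => ∑' j, c j * max (nearMass c l δ j - C * δ) 0) (𝓝[>] 0)
      (𝓝 (∑' _ : ℕ, (0:ℝ))) := by
    refine tendsto_tsum_of_dominated_convergence hs (fun j => ?_) ?_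
    · have : ∀ᶠ δ : ℝ in 𝓝[>] 0, ∀ k ∈ Finset.range j, δ < l j - l k := by
        rw [Filter.eventually_all_finset]
        intro k hk
        exact nhdsWithin_le_nhds (eventually_lt_nhds (sub_pos.2 (hl (Finset.mem_range.1 hk))))
      refine tendsto_const_nhds.congr' ?_
      filter_upwards [this, self_mem_nhdsWithin] with δ h1 h2
      have h0 : nearMass c l δ j = 0 :=
        Finset.sum_eq_zero fun k hk => if_neg (not_lt.2 (h1 k hk).le)
      have h2' : (0:ℝ) < δ := h2
      rw [h0, max_eq_right (by nlinarith), mul_zero]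
    · filter_upwards [Ioc_mem_nhdsGT (zero_lt_one' ℝ)] with δ hδ j
      rw [Real.norm_of_nonneg (mul_nonneg (hc j) (le_max_right _ _))]
      refine mul_le_mul_of_nonneg_left (max_le ?_ (hD j)) (hc j)
      linarith [hnear j δ hδ.1 hδ.2]
  simpa using key

open Topology in
/-- The asymptotic statement for a general nonnegative `c` and increasing `l`, given the near mass
bound with summable error and the growth bound on the total mass. -/
theorem tendsto_mean_square {c l D : ℕ → ℝ} (hc : ∀ j, 0 ≤ c j) (hl : StrictMono l) {C C' : ℝ}
    (hC : 0 ≤ C) (hD : ∀ j, 0 ≤ D j)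
    (hnear : ∀ j δ, 0 < δ → δ ≤ 1 → nearMass c l δ j + c j ≤ C * δ + D j)
    (hC' : ∀ j, nearMass c l 1 j ≤ C')
    (hs : Summable fun j => c j * D j) (M : ℝ → ℕ) (hM : Tendsto M atTop atTop)
    (hB : Tendsto (fun T : ℝ => (Real.sqrt T)⁻¹ * ∑ j ∈ Finset.range (M T), c j) atTop (𝓝 0)) :
    Tendsto (fun T : ℝ => ∑ j ∈ Finset.range (M T), ∑ k ∈ Finset.range (M T),
      c j * c k * avgCos T (l j - l k)) atTop (𝓝 (∑' j, c j ^ 2)) := by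
  have hnm : ∀ j δ, 0 ≤ nearMass c l δ j := fun j δ =>
    Finset.sum_nonneg fun k _ => by split_ifs <;> simp [hc k]
  have hnear' : ∀ j δ, 0 < δ → δ ≤ 1 → nearMass c l δ j ≤ C * δ + D j := fun j δ h1 h2 => by
    linarith [hnear j δ h1 h2, hc j]
  have hcD : ∀ j, c j ≤ D j := by
    intro j
    -- the near mass bound includes the atom at `j` itself, so let `δ → 0`
    have h : Tendsto (fun δ : ℝ => C * δ + D j) (𝓝[>] 0) (𝓝 (C * 0 + D j)) :=
      Tendsto.mono_left ((by fun_prop : Continuous fun δ : ℝ => C * δ + D j).tendsto 0)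
        nhdsWithin_le_nhds
    rw [mul_zero, zero_add] at h
    refine ge_of_tendsto h ?_
    filter_upwards [Ioc_mem_nhdsGT (zero_lt_one' ℝ)] with δ hδ
    linarith [hnear j δ hδ.1 hδ.2, hnm j δ]
  have hsq : Summable fun j => c j ^ 2 :=
    Summable.of_nonneg_of_le (fun j => sq_nonneg _)
      (fun j => by rw [sq]; exact mul_le_mul_of_nonneg_left (hcD j) (hc j)) hs
  have hdiag : Tendsto (fun T : ℝ => ∑ j ∈ Finset.range (M T), c j ^ 2) atTop
      (𝓝 (∑' j, c j ^ 2)) := hsq.hasSum.tendsto_sum_nat.comp hM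
  have hδ : Tendsto (fun T : ℝ => (Real.sqrt T)⁻¹) atTop (𝓝[>] 0) :=
    tendsto_inv_atTop_nhdsGT_zero.comp Real.tendsto_sqrt_atTop
  have hex := (tendsto_near_excess hc hl hC hD hnear' hs).comp hδ
  have hupper : Tendsto (fun T : ℝ =>
      2 * (∑' j, c j * max (nearMass c l (Real.sqrt T)⁻¹ j - C * (Real.sqrt T)⁻¹) 0
        + (C + C') * ((Real.sqrt T)⁻¹ * ∑ j ∈ Finset.range (M T), c j)
        + ((Real.sqrt T)⁻¹ * ∑ j ∈ Finset.range (M T), c j) ^ 2)) atTop (𝓝 0) := by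
    simpa using ((hex.add (hB.const_mul (C + C'))).add (hB.pow 2)).const_mul 2
  have hdiff : Tendsto (fun T : ℝ => ∑ j ∈ Finset.range (M T), ∑ k ∈ Finset.range (M T),
      c j * c k * avgCos T (l j - l k) - ∑ j ∈ Finset.range (M T), c j ^ 2) atTop (𝓝 0) := by
    refine squeeze_zero_norm' ?_ hupper
    filter_upwards [eventually_ge_atTop 1] with T hT
    have hT0 : 0 < T := by linarith
    have hs0 : 0 < Real.sqrt T := Real.sqrt_pos.2 hT0
    have hs1 : (Real.sqrt T)⁻¹ ≤ 1 := inv_le_one_of_one_le₀ (Real.one_le_sqrt.2 hT)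
    have hTδ : 1 / (T * (Real.sqrt T)⁻¹) = (Real.sqrt T)⁻¹ := by
      rw [← div_eq_mul_inv, Real.div_sqrt, one_div]
    refine (mean_square_sub_diag_le (C := C) hc hl hT0 (inv_pos.2 hs0) hTδ hC' (M T)).trans ?_
    gcongr
    refine Summable.sum_le_tsum _ (fun j _ => mul_nonneg (hc j) (le_max_right _ _)) ?_
    refine Summable.of_nonneg_of_le (fun j => mul_nonneg (hc j) (le_max_right _ _))
      (fun j => mul_le_mul_of_nonneg_left (max_le ?_ (hD j)) (hc j)) hs
    linarith [hnear' j _ (inv_pos.2 hs0) hs1]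
  simpa using hdiff.add hdiag

/-! ### Consequences of the counting hypothesis -/

/-- As `n` increases to infinity, `{j | n j ≤ x}` is an initial segment `{j | j < M x}`. -/
theorem exists_count {n : ℕ → ℝ} (hn : StrictMono n) (hnt : Tendsto n atTop atTop) :
    ∃ M : ℝ → ℕ, ∀ x j, n j ≤ x ↔ j < M x := by
  classical
  have h : ∀ x : ℝ, ∃ j, x < n j := fun x => (hnt.eventually_gt_atTop x).exists
  refine ⟨fun x => Nat.find (h x), fun x j => ?_⟩
  rw [Nat.lt_find_iff]
  refine ⟨fun hj m hm => not_lt.2 ((hn.monotone hm).trans hj), fun hj => not_lt.1 (hj j le_rfl)⟩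

theorem tsum_ite_eq_sum_range {α : Type*} [AddCommMonoid α] [TopologicalSpace α] {n : ℕ → ℝ}
    {M : ℝ → ℕ} (hM : ∀ x j, n j ≤ x ↔ j < M x) (f : ℕ → α) (x : ℝ) :
    ∑' j, (if n j ≤ x then f j else 0) = ∑ j ∈ Finset.range (M x), f j := by
  rw [tsum_eq_sum (s := Finset.range (M x))]
  · exact Finset.sum_congr rfl fun j hj => if_pos ((hM x j).2 (Finset.mem_range.1 hj))
  · intro j hj
    exact if_neg fun h => hj (Finset.mem_range.2 ((hM x j).1 h))

/-- The mass `∑ aⱼ / nⱼ` over each block `m - 1 < log nⱼ ≤ m` is bounded uniformly in `m`.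
All `nⱼ ≤ 1` fall into the block `m = 0`. -/
theorem exists_block_bound {n a : ℕ → ℝ} (hn : StrictMono n) (hpos : ∀ j, 0 < n j)
    (ha : ∀ j, 0 < a j) {M : ℝ → ℕ} (hM : ∀ x j, n j ≤ x ↔ j < M x)
    (hA : (fun x : ℝ => ∑ j ∈ Finset.range (M x), a j) =O[atTop] (fun x : ℝ => x)) :
    ∃ C : ℝ, 0 ≤ C ∧ ∀ (m K : ℕ),
      ∑ j ∈ Finset.range K with ⌈Real.log (n j)⌉₊ = m, a j / n j ≤ C := by
  have hexp : Tendsto (fun m : ℕ => Real.exp m) atTop atTop :=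
    Real.tendsto_exp_atTop.comp tendsto_natCast_atTop_atTop
  obtain ⟨C, hC0, hC⟩ := bound_of_isBigO_nat_atTop (hA.comp_tendsto hexp)
  have hC' : ∀ m : ℕ, ∑ j ∈ Finset.range (M (Real.exp m)), a j ≤ C * Real.exp m := by
    intro m
    have := hC (x := m) (by simp [Real.exp_ne_zero])
    simp only [Function.comp, Real.norm_eq_abs, Real.abs_exp] at this
    exact (le_abs_self _).trans this
  refine ⟨max (C * Real.exp 1) (C / n 0), le_max_of_le_left (by positivity), fun m K => ?_⟩
  have hsub : ∀ j ∈ (Finset.range K).filter (fun j => ⌈Real.log (n j)⌉₊ = m),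
      n j ≤ Real.exp m := by
    intro j hj
    rw [← Real.log_le_iff_le_exp (hpos j), ← (Finset.mem_filter.1 hj).2]
    exact Nat.le_ceil _
  have main : ∀ w : ℝ, 0 < w →
      (∀ j ∈ (Finset.range K).filter (fun j => ⌈Real.log (n j)⌉₊ = m), w ≤ n j) →
      ∑ j ∈ Finset.range K with ⌈Real.log (n j)⌉₊ = m, a j / n j ≤ C * Real.exp m / w := by
    intro w hw hwn
    calc ∑ j ∈ Finset.range K with ⌈Real.log (n j)⌉₊ = m, a j / n j
        ≤ ∑ j ∈ Finset.range K with ⌈Real.log (n j)⌉₊ = m, a j / w :=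
          Finset.sum_le_sum fun j hj =>
            div_le_div_of_nonneg_left (ha j).le hw (hwn j hj)
      _ = (∑ j ∈ Finset.range K with ⌈Real.log (n j)⌉₊ = m, a j) / w := by
          rw [Finset.sum_div]
      _ ≤ (∑ j ∈ Finset.range (M (Real.exp m)), a j) / w := by
          refine div_le_div_of_nonneg_right (Finset.sum_le_sum_of_subset_of_nonneg
            (fun j hj => ?_) (fun j _ _ => (ha j).le)) hw.le
          exact Finset.mem_range.2 ((hM _ _).1 (hsub j hj))
      _ ≤ C * Real.exp m / w := by gcongr; exact hC' m
  rcases Nat.eq_zero_or_pos m with rfl | hm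
  · refine (main (n 0) (hpos 0) fun j _ => hn.monotone (Nat.zero_le j)).trans ?_
    simp
  · refine (main (Real.exp (m - 1)) (Real.exp_pos _) fun j hj => ?_).trans ?_
    · rw [← Real.le_log_iff_exp_le (hpos j)]
      have h1 := (Finset.mem_filter.1 hj).2
      have h2 : m - 1 < ⌈Real.log (n j)⌉₊ := by omega
      have h3 := (Nat.lt_ceil.1 h2).le
      rwa [Nat.cast_sub hm, Nat.cast_one] at h3
    · refine le_max_of_le_left (le_of_eq ?_)
      rw [Real.exp_sub]
      field_simp

/-- If `c` has mass at most `C` on each fibre of `g`, then weighting it by a function of `g` costs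
at most `C` times the sum of the weights. -/
theorem sum_le_of_block {c : ℕ → ℝ} {g : ℕ → ℕ} {C : ℝ}
    (hblock : ∀ m K : ℕ, ∑ j ∈ Finset.range K with g j = m, c j ≤ C) (w : ℕ → ℝ)
    (hw : ∀ m, 0 ≤ w m) (K R : ℕ) (hR : ∀ j < K, g j < R) :
    ∑ j ∈ Finset.range K, c j * w (g j) ≤ C * ∑ m ∈ Finset.range R, w m := by
  rw [← Finset.sum_fiberwise_of_maps_to (s := Finset.range K) (t := Finset.range R) (g := g)
    (fun j hj => Finset.mem_range.2 (hR j (Finset.mem_range.1 hj))), Finset.mul_sum]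
  refine Finset.sum_le_sum fun m _ => ?_
  calc ∑ j ∈ Finset.range K with g j = m, c j * w (g j)
      = (∑ j ∈ Finset.range K with g j = m, c j) * w m := by
        rw [Finset.sum_mul]
        exact Finset.sum_congr rfl fun j hj => by rw [(Finset.mem_filter.1 hj).2]
    _ ≤ C * w m := mul_le_mul_of_nonneg_right (hblock m K) (hw m)

theorem summable_of_block {c : ℕ → ℝ} (hc : ∀ j, 0 ≤ c j) {g : ℕ → ℕ} {C : ℝ} (hC : 0 ≤ C)
    (hblock : ∀ m K : ℕ, ∑ j ∈ Finset.range K with g j = m, c j ≤ C) {w : ℕ → ℝ}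
    (hw : ∀ m, 0 ≤ w m) (hws : Summable w) : Summable fun j => c j * w (g j) := by
  refine summable_of_sum_range_le (c := C * ∑' m, w m)
    (fun j => mul_nonneg (hc j) (hw _)) fun K => ?_
  refine (sum_le_of_block hblock w hw K ((Finset.range K).sup g + 1) fun j hj =>
    Nat.lt_succ_of_le (Finset.le_sup (f := g) (Finset.mem_range.2 hj))).trans ?_
  gcongr
  exact hws.sum_le_tsum _ fun m _ => hw m

/-- Short intervals in the logarithmic scale: the main term of the counting function contributes
`O(δ)`, while the error term contributes a power of `⌈log nⱼ⌉₊ + 1`, which for `p > 1` is summable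
over unit blocks. The finitely many small `j`, where the asymptotics say nothing, are absorbed
into `D`. -/
theorem exists_near_bound {n a : ℕ → ℝ} {ρ p : ℝ} (hn : StrictMono n) (hpos : ∀ j, 0 < n j)
    (hnt : Tendsto n atTop atTop) (ha : ∀ j, 0 < a j) (hρ : 0 < ρ) (hp : 0 < p)
    {M : ℝ → ℕ} (hM : ∀ x j, n j ≤ x ↔ j < M x)
    (hA : (fun x : ℝ => (∑ j ∈ Finset.range (M x), a j) - ρ * x)
      =O[atTop] (fun x : ℝ => x / Real.log x ^ p)) :
    ∃ C D : ℝ, 0 ≤ C ∧ 0 ≤ D ∧ ∀ j δ, 0 < δ → δ ≤ 1 →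
      nearMass (fun j => a j / n j) (fun j => Real.log (n j)) δ j + a j / n j
        ≤ C * δ + D * ((⌈Real.log (n j)⌉₊ : ℝ) + 1) ^ (-p) := by
  obtain ⟨K, hK0, hK⟩ := hA.exists_pos
  obtain ⟨X, hX⟩ := Filter.eventually_atTop.1 hK.bound
  set c : ℕ → ℝ := fun j => a j / n j with hc
  have hc0 : ∀ j, 0 < c j := fun j => div_pos (ha j) (hpos j)
  obtain ⟨j₀, hj₀⟩ := Filter.eventually_atTop.1
    (hnt.eventually_ge_atTop (max (Real.exp 2) (Real.exp 1 * X)))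
  have hg0 : ∀ j, (0:ℝ) < (⌈Real.log (n j)⌉₊ : ℝ) + 1 := fun j => by positivity
  have hfull : ∀ j δ, nearMass c (fun j => Real.log (n j)) δ j + c j
      ≤ ∑ k ∈ Finset.range (j + 1), c k := by
    intro j δ
    rw [Finset.sum_range_succ, nearMass]
    gcongr with k _
    split_ifs
    · exact le_rfl
    · exact (hc0 k).le
  set D₁ := Real.exp 1 * (K * 4 ^ p + K * 4 ^ p)
  set D₂ := (∑ k ∈ Finset.range j₀, c k) * ((⌈Real.log (n j₀)⌉₊ : ℝ) + 1) ^ p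
  have hD₁ : 0 ≤ D₁ := by positivity
  have hD₂ : 0 ≤ D₂ := mul_nonneg (Finset.sum_nonneg fun k _ => (hc0 k).le) (by positivity)
  refine ⟨Real.exp 1 * ρ, D₁ + D₂, by positivity, by positivity, fun j δ hδ hδ1 => ?_⟩
  rw [add_mul]
  set G := (⌈Real.log (n j)⌉₊ : ℝ) + 1 with hG
  have hGpos : 0 < G := hg0 j
  have hGp : 0 < G ^ (-p) := Real.rpow_pos_of_pos hGpos _
  rcases lt_or_ge j j₀ with hj | hj
  · refine (hfull j δ).trans ?_
    have h1 : ∑ k ∈ Finset.range (j + 1), c k ≤ ∑ k ∈ Finset.range j₀, c k :=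
      Finset.sum_le_sum_of_subset_of_nonneg (Finset.range_subset_range.2 hj)
        fun k _ _ => (hc0 k).le
    have h2 : G ≤ (⌈Real.log (n j₀)⌉₊ : ℝ) + 1 := by
      have : ⌈Real.log (n j)⌉₊ ≤ ⌈Real.log (n j₀)⌉₊ :=
        Nat.ceil_mono (Real.log_le_log (hpos j) (hn.monotone hj.le))
      rw [hG]
      gcongr
    have h3 : 1 ≤ ((⌈Real.log (n j₀)⌉₊ : ℝ) + 1) ^ p * G ^ (-p) := by
      have : G ^ p ≤ ((⌈Real.log (n j₀)⌉₊ : ℝ) + 1) ^ p := by gcongr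
      calc (1:ℝ) = G ^ p * G ^ (-p) := by
            rw [← Real.rpow_add hGpos]; simp
        _ ≤ _ := by gcongr
    have h4 : ∑ k ∈ Finset.range j₀, c k ≤ D₂ * G ^ (-p) := by
      have hs : 0 ≤ ∑ k ∈ Finset.range j₀, c k := Finset.sum_nonneg fun k _ => (hc0 k).le
      have := mul_le_mul_of_nonneg_left h3 hs
      rw [mul_one, ← mul_assoc] at this
      exact this
    have h5 : 0 ≤ Real.exp 1 * ρ * δ := by positivity
    have h6 : 0 ≤ D₁ * G ^ (-p) := by positivity
    linarith
  · have hy := hj₀ j hj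
    set y := n j with hy_def
    have hy0 : 0 < y := hpos j
    have hl2 : 2 ≤ Real.log y := (Real.le_log_iff_exp_le hy0).2 ((le_max_left _ _).trans hy)
    set z := y * Real.exp (-δ) with hz
    have hz0 : 0 < z := by positivity
    have hlz : Real.log z = Real.log y - δ := by
      rw [hz, Real.log_mul hy0.ne' (Real.exp_ne_zero _), Real.log_exp]; ring
    have hzy : z ≤ y := by
      rw [hz]
      exact mul_le_of_le_one_right hy0.le (Real.exp_le_one_iff.2 (by linarith))
    have hXz : X ≤ z := by
      have h1 : Real.exp 1 * X ≤ y := (le_max_right _ _).trans hy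
      have h2 : y * Real.exp (-1) ≤ z := by rw [hz]; gcongr
      have h3 : X = Real.exp 1 * X * Real.exp (-1) := by
        rw [mul_right_comm, ← Real.exp_add]; simp
      calc X = Real.exp 1 * X * Real.exp (-1) := h3
        _ ≤ y * Real.exp (-1) := by gcongr
        _ ≤ z := h2
    have hceil : G ≤ Real.log y + 2 := by
      have := Nat.ceil_lt_add_one (by linarith : 0 ≤ Real.log y)
      rw [hG]; linarith
    -- both error terms are compared with the weight of the block containing `y`
    have herr : ∀ x, X ≤ x → 0 < x → x ≤ y → G / 4 ≤ Real.log x →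
        |(∑ k ∈ Finset.range (M x), a k) - ρ * x| ≤ K * 4 ^ p * G ^ (-p) * y := by
      intro x hx hx0 hxy hxl
      have h1 := hX x hx
      have hlp : 0 < Real.log x := lt_of_lt_of_le (by positivity) hxl
      rw [Real.norm_eq_abs, Real.norm_of_nonneg (by positivity)] at h1
      refine h1.trans ?_
      have h2 : x / Real.log x ^ p ≤ y / (G / 4) ^ p := by gcongr
      have h3 : y / (G / 4) ^ p = 4 ^ p * G ^ (-p) * y := by
        rw [Real.div_rpow hGpos.le (by norm_num), Real.rpow_neg hGpos.le]
        field_simp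
      calc K * (x / Real.log x ^ p) ≤ K * (4 ^ p * G ^ (-p) * y) := by
            rw [← h3]; gcongr
        _ = _ := by ring
    have ey := herr y (hXz.trans hzy) hy0 le_rfl (by linarith)
    have ez := herr z hXz hz0 hzy (by linarith)
    have hMy : M y = j + 1 := by
      refine le_antisymm ?_ ((hM y j).1 le_rfl)
      by_contra! h
      exact absurd ((hM y (j + 1)).2 h) (not_le.2 (hn (Nat.lt_succ_self j)))
    have hMzy : M z ≤ M y := by
      by_contra! h
      exact absurd ((hM y (M y)).1 (((hM z (M y)).2 h).trans hzy)) (lt_irrefl _)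
    have hnear : nearMass c (fun j => Real.log (n j)) δ j + c j
        = ∑ k ∈ Finset.Ico (M z) (M y), c k := by
      have h1 : c j = if Real.log (n j) - Real.log (n j) < δ then c j else 0 := by
        rw [sub_self, if_pos hδ]
      rw [nearMass, h1, ← Finset.sum_range_succ
        (fun k => if Real.log (n j) - Real.log (n k) < δ then c k else 0), ← hMy,
        ← Finset.sum_filter]
      refine Finset.sum_congr ?_ fun _ _ => rfl
      ext k
      have h2 : Real.log (n j) - Real.log (n k) < δ ↔ M z ≤ k := by
        rw [← not_lt, ← hM z k, ← Real.log_le_log_iff (hpos k) hz0, hlz, not_le]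
        constructor <;> intro h <;> linarith
      rw [Finset.mem_filter, Finset.mem_range, Finset.mem_Ico, h2, and_comm]
    rw [show a j / y = c j from rfl, hnear]
    have hup : ∑ k ∈ Finset.Ico (M z) (M y), c k
        ≤ (∑ k ∈ Finset.Ico (M z) (M y), a k) / z := by
      rw [Finset.sum_div]
      refine Finset.sum_le_sum fun k hk => ?_
      refine div_le_div_of_nonneg_left (ha k).le hz0 ?_
      by_contra! h
      exact absurd ((hM z k).1 h.le) (not_lt.2 (Finset.mem_Ico.1 hk).1)
    refine hup.trans ?_
    rw [Finset.sum_Ico_eq_sub _ hMzy, div_le_iff₀ hz0]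
    have hδe : 1 - Real.exp (-δ) ≤ δ := by linarith [Real.add_one_le_exp (-δ)]
    have hyz : ρ * y - ρ * z ≤ ρ * δ * y := by
      have : ρ * y - ρ * z = ρ * y * (1 - Real.exp (-δ)) := by rw [hz]; ring
      rw [this]
      calc _ ≤ ρ * y * δ := by gcongr
        _ = _ := by ring
    have hye : y ≤ Real.exp 1 * z := by
      have : Real.exp 1 * z = y * Real.exp (1 - δ) := by
        rw [hz, sub_eq_add_neg, Real.exp_add]; ring
      rw [this]
      exact le_mul_of_one_le_right hy0.le (Real.one_le_exp (by linarith))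
    set Q := ρ * δ + (K * 4 ^ p + K * 4 ^ p) * G ^ (-p)
    have hQ : 0 ≤ Q := by positivity
    have h1 := (abs_le.1 ey).2
    have h2 := (abs_le.1 ez).1
    have h3 : (∑ k ∈ Finset.range (M y), a k) - ∑ k ∈ Finset.range (M z), a k ≤ Q * y := by
      have : Q * y = ρ * δ * y + K * 4 ^ p * G ^ (-p) * y + K * 4 ^ p * G ^ (-p) * y := by
        ring
      linarith
    have h4 : 0 ≤ D₂ * G ^ (-p) * z := by positivity
    calc _ ≤ Q * y := h3
      _ ≤ Q * (Real.exp 1 * z) := by gcongr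
      _ = (Real.exp 1 * ρ * δ + D₁ * G ^ (-p)) * z := by ring
      _ ≤ _ := by linarith

/-! ### The mean square -/

/-- under `∑_{n j ≤ x} a j = ρ x + O(x/(log x)^(3/2+ε))`, the
mean square of the truncated Dirichlet polynomial on the 1-line tends to
`∑ j a j² / n j²` as `T → ∞`, `N → ∞` with `(log N)² = o(T)` (formalized via
an arbitrary truncation function `N(T)` subject to these conditions). -/
theorem stmt_6
    (n a : ℕ → ℝ) (ρ ε : ℝ)
    (hn : StrictMono n) (hpos : ∀ j, 0 < n j) (hnt : Tendsto n atTop atTop)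
    (ha : ∀ j, 0 < a j) (hρ : 0 < ρ) (hε : 0 < ε)
    (hA : (fun x : ℝ => (∑' j, if n j ≤ x then a j else 0) - ρ * x)
      =O[atTop] (fun x : ℝ => x / Real.log x ^ (3 / 2 + ε)))
    (N : ℝ → ℝ) (hN : Tendsto N atTop atTop)
    (hNT : (fun T : ℝ => Real.log (N T) ^ 2) =o[atTop] (fun T : ℝ => T)) :
    Tendsto (fun T : ℝ => (1 / T) *
        ∫ t in (0:ℝ)..T,
          ‖∑' j, if n j ≤ N T then (a j : ℂ) / (n j : ℂ) ^ ((1 : ℂ) + t * Complex.I)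
            else 0‖ ^ 2)
      atTop (nhds (∑' j, a j ^ 2 / n j ^ 2)) := by
  obtain ⟨M, hM⟩ := exists_count hn hnt
  simp only [tsum_ite_eq_sum_range hM] at hA ⊢
  set p := 3 / 2 + ε with hp
  have hp1 : 1 < p := by rw [hp]; linarith
  have hc0 : ∀ j, 0 ≤ a j / n j := fun j => (div_pos (ha j) (hpos j)).le
  have hl : StrictMono fun j => Real.log (n j) := fun i j hij => Real.log_lt_log (hpos i) (hn hij)
  have hMt : Tendsto M atTop atTop := tendsto_atTop.2 fun b => by
    filter_upwards [eventually_ge_atTop (n b)] with x hx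
    exact ((hM x b).1 hx).le
  have hA' : (fun x : ℝ => ∑ j ∈ Finset.range (M x), a j) =O[atTop] (fun x : ℝ => x) := by
    have h1 : (fun x : ℝ => x / Real.log x ^ p) =O[atTop] (fun x : ℝ => x) := by
      refine IsBigO.of_bound 1 ?_
      filter_upwards [eventually_ge_atTop (Real.exp 1)] with x hx
      have hx0 : 0 < x := (Real.exp_pos 1).trans_le hx
      have hl1 : 1 ≤ Real.log x := (Real.le_log_iff_exp_le hx0).2 hx
      rw [norm_div, one_mul]
      refine div_le_self (norm_nonneg _) ?_
      rw [Real.norm_of_nonneg (by positivity)]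
      exact Real.one_le_rpow hl1 (by linarith)
    have h2 : (fun x : ℝ => ρ * x) =O[atTop] (fun x : ℝ => x) :=
      (isBigO_refl _ _).const_mul_left ρ
    simpa using (hA.trans h1).add h2
  obtain ⟨C₁, hC₁, hblock⟩ := exists_block_bound hn hpos ha hM hA'
  obtain ⟨C, D, hC, hD, hnear⟩ := exists_near_bound hn hpos hnt ha hρ (by linarith) hM hA
  have hw0 : ∀ m : ℕ, 0 ≤ D * ((m : ℝ) + 1) ^ (-p) := fun m => by positivity
  have hws : Summable fun m : ℕ => D * ((m : ℝ) + 1) ^ (-p) := by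
    have := (summable_nat_add_iff 1).2 (Real.summable_nat_rpow.2 (by linarith : -p < -1))
    push_cast at this
    exact this.mul_left D
  have hs := summable_of_block hc0 hC₁ hblock hw0 hws
  have hC' : ∀ j, nearMass (fun j => a j / n j) (fun j => Real.log (n j)) 1 j ≤ C + D := by
    intro j
    have h1 := hnear j 1 one_pos le_rfl
    have h2 : ((⌈Real.log (n j)⌉₊ : ℝ) + 1) ^ (-p) ≤ 1 :=
      Real.rpow_le_one_of_one_le_of_nonpos (le_add_of_nonneg_left (Nat.cast_nonneg _))
        (by linarith)
    have h3 := mul_le_mul_of_nonneg_left h2 hD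
    linarith [hc0 j]
  have hlogT : Tendsto (fun T : ℝ => (Real.sqrt T)⁻¹ * Real.log (N T)) atTop (nhds 0) := by
    have h1 := (hNT.tendsto_div_nhds_zero).sqrt
    rw [Real.sqrt_zero] at h1
    refine h1.congr' ?_
    filter_upwards [eventually_gt_atTop 0, hN.eventually_ge_atTop 1] with T hT hNT1
    rw [Real.sqrt_div (sq_nonneg _), Real.sqrt_sq (Real.log_nonneg hNT1), div_eq_inv_mul]
  -- `∑_{nⱼ ≤ N} aⱼ / nⱼ = O(log N)`, by counting unit blocks
  have hB : Tendsto (fun T : ℝ => (Real.sqrt T)⁻¹ * ∑ j ∈ Finset.range (M (N T)), a j / n j)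
      atTop (nhds 0) := by
    have hδ : Tendsto (fun T : ℝ => (Real.sqrt T)⁻¹) atTop (nhds 0) :=
      tendsto_inv_atTop_zero.comp Real.tendsto_sqrt_atTop
    have hup : Tendsto (fun T : ℝ => C₁ * ((Real.sqrt T)⁻¹ * Real.log (N T)
        + (Real.sqrt T)⁻¹ * 2)) atTop (nhds 0) := by
      simpa using (hlogT.add (hδ.mul_const 2)).const_mul C₁
    refine squeeze_zero' (Eventually.of_forall fun T => mul_nonneg (by positivity)
      (Finset.sum_nonneg fun j _ => hc0 j)) ?_ hup
    filter_upwards [hN.eventually_ge_atTop 1] with T hT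
    have h1 := sum_le_of_block hblock (fun _ => 1) (fun _ => zero_le_one) (M (N T))
      (⌈Real.log (N T)⌉₊ + 1) fun j hj =>
        Nat.lt_succ_of_le (Nat.ceil_mono (Real.log_le_log (hpos j) ((hM _ _).2 hj)))
    have h2 := (Nat.ceil_lt_add_one (Real.log_nonneg hT)).le
    simp only [mul_one, Finset.sum_const, Finset.card_range, nsmul_eq_mul] at h1
    push_cast at h1
    calc (Real.sqrt T)⁻¹ * ∑ j ∈ Finset.range (M (N T)), a j / n j
        ≤ (Real.sqrt T)⁻¹ * (C₁ * (Real.log (N T) + 2)) := by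
          gcongr
          exact h1.trans (mul_le_mul_of_nonneg_left (by linarith) hC₁)
      _ = _ := by ring
  -- the terms `aⱼ / nⱼ ^ (1 + it)` are `cⱼ exp (-i t lⱼ)` with `cⱼ = aⱼ / nⱼ`, `lⱼ = log nⱼ`
  have main := tendsto_mean_square hc0 hl hC (fun j => hw0 _) hnear hC' hs (fun T => M (N T))
    (hMt.comp hN) hB
  simp only [← mean_square_eq, div_pow] at main
  refine main.congr fun T => ?_
  congr 1
  refine intervalIntegral.integral_congr fun t _ => ?_
  congr 2
  refine Finset.sum_congr rfl fun j _ => ?_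
  have hnj : (n j : ℂ) ≠ 0 := Complex.ofReal_ne_zero.2 (hpos j).ne'
  rw [Complex.cpow_add _ _ hnj, Complex.cpow_one, Complex.cpow_def_of_ne_zero hnj,
    ← Complex.ofReal_log (hpos j).le, div_mul_eq_div_div, Complex.ofReal_div,
    div_eq_mul_inv _ (Complex.exp _), ← Complex.exp_neg]
  congr 2
  push_cast
  ring
end

section
/- Let (n_j) be strictly increasing positive reals tending to infinity and a_j > 0 with ∑_{n_j ≤ x} a_j = ρx + O(x/(log x)^{3/2+ε}) for some ρ > 0, ε > 0. Then the second moment of f on the 1-line exists: lim_{T→∞} (1/T) ∫_1^T |f(1+it)|² dt = ∑_{j=1}^∞ a_j²/n_j², and the series on the right converges. -/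
open Filter Asymptotics

/-!
Put `u k = log (n k)` and `b k = a k / n k`, so that on the boundary line `F (1 + i t)` is formally
`∑ b k e^{-i t u k}`. A finite sum of this shape has mean square `∑ b k ^ 2`
(`tendsto_mean_poly`), and by a Besicovitch-type approximation (`tendsto_mean_of_approx`) it is
enough to see that the tails `G J = F - ∑_{k < J}` satisfy
`lim_J limsup_X (1/X) ∫_1^X ‖G J (1 + i t)‖ ^ 2 dt = 0`.

By dyadic decomposition one needs the integral over `[X, 2 X]`, `X = 2 π T`. Majorize the indicator
of `[1, 2]` by a smooth weight `w` with Fourier transform `κ`. To the right of the line, at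
`1 + η + i t`, the tail is an absolutely convergent sum with positive coefficients `c k ≤ b k`, and
expanding the square gives at most `∑_j c j |∑_k c k κ (T (u j - u k))|` (`quad_le`). The inner sum
is evaluated by Abel summation against the counting function (`LogCount.abel`): its main term is
`ρ ∫ κ = ρ w 0 = 0` up to `O(1/T)`, which disposes of the pole at `1` without any separation of the
frequencies, and the error term is `O(decay (u j))`, where `decay v = v ^ (-3/2)`
(`LogCount.kernel_sum_le`). Hence the mean square over `[X, 2 X]` is at most a constant times
`δ J + O_J(1/X)`, where `δ J = ∑_{k ≥ J} b k decay (u k)`, uniformly in `η`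
(`LogCount.mean_square_le`). Continuity of `F` allows `η → 0` (`boundary_le`). Since `decay` is
integrable at infinity, `∑ b k decay (u k)` converges (`LogCount.summable_decay`) and `δ J → 0`. The
constants are uniform in `J` because all tails have the same error constant `C`
(`exists_logCount`).
-/

section
open MeasureTheory Set Topology Real

/-! ### The decay rate -/

/-- The decay rate `v ^ (-3/2)`; with `v = log x` it is the relative error in the counting
function. -/
noncomputable def decay (v : ℝ) : ℝ := v ^ (-(3 / 2) : ℝ)

theorem decay_pos {v : ℝ} (hv : 0 < v) : 0 < decay v := Real.rpow_pos_of_pos hv _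

theorem decay_le_one {v : ℝ} (hv : 1 ≤ v) : decay v ≤ 1 :=
  Real.rpow_le_one_of_one_le_of_nonpos hv (by norm_num)

/-- Peetre-type inequality: `decay` is slowly varying. -/
theorem decay_le_mul {u v : ℝ} (hu : 1 ≤ u) (hv : 1 ≤ v) :
    decay v ≤ decay u * (1 + |u - v|) ^ 2 := by
  have hu0 : 0 < u := by linarith
  have hv0 : 0 < v := by linarith
  have h1 : u ≤ v * (1 + |u - v|) := by
    nlinarith [le_abs_self (u - v), abs_nonneg (u - v)]
  have h2 : u ^ (3 / 2 : ℝ) ≤ v ^ (3 / 2 : ℝ) * (1 + |u - v|) ^ (3 / 2 : ℝ) := by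
    rw [← Real.mul_rpow hv0.le (by positivity)]
    exact Real.rpow_le_rpow hu0.le h1 (by norm_num)
  have h3 : (1 + |u - v|) ^ (3 / 2 : ℝ) ≤ (1 + |u - v|) ^ 2 := by
    rw [← Real.rpow_natCast]
    exact Real.rpow_le_rpow_of_exponent_le (by linarith [abs_nonneg (u - v)]) (by norm_num)
  have hup : 0 < u ^ (3 / 2 : ℝ) := Real.rpow_pos_of_pos hu0 _
  have hvp : 0 < v ^ (3 / 2 : ℝ) := Real.rpow_pos_of_pos hv0 _
  unfold decay
  rw [Real.rpow_neg hu0.le, Real.rpow_neg hv0.le, inv_mul_eq_div, le_div_iff₀ hup,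
    inv_mul_le_iff₀ hvp]
  exact h2.trans (by gcongr)

theorem hasDerivAt_decay {v : ℝ} (hv : 0 < v) :
    HasDerivAt decay (-(3 / 2) * v ^ (-(5 / 2) : ℝ)) v := by
  have := Real.hasDerivAt_rpow_const (x := v) (p := (-(3 / 2) : ℝ)) (Or.inl hv.ne')
  rw [show (-(5 / 2) : ℝ) = -(3 / 2) - 1 by norm_num]
  exact this

theorem integrableOn_decay {c : ℝ} (hc : 0 < c) : IntegrableOn decay (Ioi c) :=
  integrableOn_Ioi_rpow_of_lt (by norm_num) hc

theorem tendsto_decay : Tendsto decay atTop (𝓝 0) :=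
  tendsto_rpow_neg_atTop (by norm_num)

theorem measurable_decay : Measurable decay := by unfold decay; fun_prop

/-! ### The smoothing kernel -/

/-- `w` is a nonnegative integrable weight equal to `1` on `[1, 2]`, `κ` is its Fourier transform
and `κ'` the derivative of `κ`, both decaying fast enough to be integrable against `(1 + |x|) ^ 2`.
The field `zero`, which amounts to `w 0 = 0`, is what removes the contribution of the pole. -/
structure Kern (w : ℝ → ℝ) (κ κ' : ℝ → ℂ) : Prop where
  w_cont : Continuous w
  w_nonneg : ∀ τ, 0 ≤ w τ
  w_one : ∀ τ ∈ Icc (1 : ℝ) 2, w τ = 1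
  w_int : Integrable w
  fourier : ∀ x, κ x = ∫ τ, (w τ : ℂ) * Complex.exp (-(2 * π * τ * x : ℝ) * Complex.I)
  der : ∀ x, HasDerivAt κ (κ' x) x
  cont : Continuous κ
  cont' : Continuous κ'
  int0 : Integrable (fun x => ‖κ x‖ * (1 + |x|) ^ 2)
  int1 : Integrable (fun x => ‖κ' x‖ * (1 + |x|) ^ 2)
  int : Integrable κ
  int' : Integrable κ'
  zero : ∫ x, κ x = 0
  lim : Tendsto κ atBot (𝓝 0)

open scoped FourierTransform SchwartzMap in
/-- A smooth bump supported in `[1 / 2, 5 / 2]` will do, its Fourier transform being a Schwartz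
function. -/
theorem exists_kern : ∃ w κ κ', Kern w κ κ' := by
  let b : ContDiffBump (3 / 2 : ℝ) := ⟨1 / 2, 1, by norm_num, by norm_num⟩
  have hsupp : HasCompactSupport (fun x => (b x : ℂ)) :=
    b.hasCompactSupport.comp_left (g := fun y : ℝ => (y : ℂ)) Complex.ofReal_zero
  have hsm : ContDiff ℝ ((⊤ : ℕ∞) : WithTop ℕ∞) (fun x => (b x : ℂ)) :=
    Complex.ofRealCLM.contDiff.comp b.contDiff
  let W : 𝓢(ℝ, ℂ) := hsupp.toSchwartzMap hsm
  have hW : ∀ x, W x = (b x : ℂ) := fun x => rfl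
  let K : 𝓢(ℝ, ℂ) := 𝓕 W
  let K' : 𝓢(ℝ, ℂ) := SchwartzMap.derivCLM ℝ ℂ K
  have hint : ∀ f : 𝓢(ℝ, ℂ), Integrable (fun x => ‖f x‖ * (1 + |x|) ^ 2) := by
    intro f
    have h0 := f.integrable_pow_mul volume 0
    have h1 := f.integrable_pow_mul volume 1
    have h2 := f.integrable_pow_mul volume 2
    refine ((h0.add (h1.const_mul 2)).add h2).congr (Eventually.of_forall fun x => ?_)
    simp only [Pi.add_apply, Real.norm_eq_abs]
    ring
  refine ⟨b, K, K', b.continuous, fun τ => b.nonneg, fun τ hτ => ?_, ?_, ?_, ?_, K.continuous,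
    K'.continuous, hint K, hint K', K.integrable, K'.integrable, ?_, ?_⟩
  · apply b.one_of_mem_closedBall
    rw [Metric.mem_closedBall, Real.dist_eq, abs_le]
    constructor <;> norm_num [b] <;> linarith [hτ.1, hτ.2]
  · exact b.continuous.integrable_of_hasCompactSupport b.hasCompactSupport
  · intro x
    have : K x = 𝓕 (W : ℝ → ℂ) x := by rw [← SchwartzMap.fourier_coe]
    rw [this, Real.fourier_eq']
    congr 1
    ext τ
    simp only [hW, smul_eq_mul]
    rw [mul_comm]
    congr 3
    simp
    ring
  · intro x
    have := K.differentiableAt (x := x)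
    simpa [K'] using this.hasDerivAt
  -- Fourier inversion at `0`, where the bump vanishes.
  · have h : 𝓕⁻ K = W := FourierTransform.fourierInv_fourier_eq W
    have h2 : (𝓕⁻ K : 𝓢(ℝ, ℂ)) 0 = W 0 := by rw [h]
    have h3 : (𝓕⁻ K : 𝓢(ℝ, ℂ)) 0 = 𝓕⁻ (K : ℝ → ℂ) 0 := by rw [← SchwartzMap.fourierInv_coe]
    rw [h3, Real.fourierInv_eq'] at h2
    simp only [inner_zero_right, mul_zero, Complex.ofReal_zero, zero_mul, Complex.exp_zero,
      one_smul] at h2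
    rw [h2, hW, b.zero_of_le_dist (by rw [Real.dist_eq]; norm_num [b])]
    simp
  · exact K.tendsto_cocompact.mono_left (by rw [cocompact_eq_atBot_atTop]; exact le_sup_left)

/-! ### Counting functions and Abel summation -/

/-- The counting function `∑_{u k ≤ v} a k`. -/
noncomputable def count (u a : ℕ → ℝ) (v : ℝ) : ℝ := ∑' k, if u k ≤ v then a k else 0

/-- The log-frequencies `u k` with weights `a k` start at `u 0 ≥ 1` and have counting function
`ρ (e^v - e^{u 0})` up to a relative error `C v ^ (-3/2)`. -/
structure LogCount (u a : ℕ → ℝ) (ρ C : ℝ) : Prop where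
  mono : StrictMono u
  top : Tendsto u atTop atTop
  one_le : 1 ≤ u 0
  pos : ∀ k, 0 < a k
  rho : 0 < ρ
  C_nonneg : 0 ≤ C
  bound : ∀ v, u 0 ≤ v → |count u a v - ρ * (exp v - exp (u 0))| ≤ C * (exp v * decay v)

theorem summable_count {u a : ℕ → ℝ} (top : Tendsto u atTop atTop) (v : ℝ) :
    Summable (fun k => if u k ≤ v then a k else 0) := by
  obtain ⟨K, hK⟩ := eventually_atTop.1 (top.eventually_gt_atTop v)
  refine summable_of_ne_finset_zero (s := Finset.range K) fun k hk => ?_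
  rw [if_neg]
  simpa using hK k (by simpa using hk)

theorem count_mono {u a : ℕ → ℝ} (top : Tendsto u atTop atTop) (pos : ∀ k, 0 < a k) :
    Monotone (count u a) := by
  intro v v' h
  refine (summable_count top v).tsum_le_tsum (fun k => ?_) (summable_count top v')
  by_cases h1 : u k ≤ v
  · rw [if_pos h1, if_pos (h1.trans h)]
  · rw [if_neg h1]
    split_ifs
    exacts [(pos k).le, le_rfl]

theorem count_nonneg {u a : ℕ → ℝ} (pos : ∀ k, 0 < a k) (v : ℝ) : 0 ≤ count u a v :=
  tsum_nonneg fun k => by split_ifs; exacts [(pos k).le, le_rfl]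

namespace LogCount
variable {u a : ℕ → ℝ} {ρ C : ℝ}

theorem le_u (H : LogCount u a ρ C) (k : ℕ) : u 0 ≤ u k := H.mono.monotone (Nat.zero_le k)

theorem one_le_u (H : LogCount u a ρ C) (k : ℕ) : 1 ≤ u k := H.one_le.trans (H.le_u k)

theorem count_le (H : LogCount u a ρ C) {v : ℝ} (hv : u 0 ≤ v) :
    count u a v ≤ (ρ + C) * exp v := by
  have h1 := (abs_le.1 (H.bound v hv)).2
  have h2 : decay v ≤ 1 := decay_le_one (H.one_le.trans hv)
  have h3 : C * (exp v * decay v) ≤ C * exp v := by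
    have := H.C_nonneg
    have := (exp_pos v).le
    exact mul_le_mul_of_nonneg_left (mul_le_of_le_one_right this h2) H.C_nonneg
  have h4 : 0 < ρ * exp (u 0) := mul_pos H.rho (exp_pos _)
  nlinarith

/-- Abel summation: the sum of `a k e^{-u k} χ (u k)` is compared with `ρ ∫ χ`. -/
theorem abel (H : LogCount u a ρ C) {χ χ' : ℝ → ℂ}
    (hd : ∀ v, u 0 ≤ v → HasDerivAt χ (χ' v) v)
    (hi : IntegrableOn χ (Ioi (u 0))) (hi' : IntegrableOn χ' (Ioi (u 0)))
    (hl : Tendsto χ atTop (𝓝 0)) :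
    Summable (fun k => ((a k * exp (-u k) : ℝ) : ℂ) * χ (u k)) ∧
    ‖∑' k, ((a k * exp (-u k) : ℝ) : ℂ) * χ (u k) - ρ * ∫ v in Ioi (u 0), χ v‖ ≤
      C * ∫ v in Ioi (u 0), (‖χ v‖ + ‖χ' v‖) * decay v := by
  -- With `ψ v = e^{-v} χ v` the sum becomes `∑ a k ψ (u k) = - ∫ ψ' · count`.
  let ψ : ℝ → ℂ := fun v => (exp (-v) : ℝ) * χ v
  let ψ' : ℝ → ℂ := fun v => (exp (-v) : ℝ) * (χ' v - χ v)
  have hψ : ∀ v, u 0 ≤ v → HasDerivAt ψ (ψ' v) v := by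
    intro v hv
    have h1 : HasDerivAt (fun v : ℝ => ((exp (-v) : ℝ) : ℂ)) ((-exp (-v) : ℝ) : ℂ) v := by
      have := ((hasDerivAt_neg v).exp).ofReal_comp
      simpa using this
    have h2 := h1.mul (hd v hv)
    have h3 : ψ' v = ((-exp (-v) : ℝ) : ℂ) * χ v + ((exp (-v) : ℝ) : ℂ) * χ' v := by
      simp only [ψ']
      push_cast
      ring
    rw [h3]
    exact h2
  have hexp1 : ∀ v ∈ Ioi (u 0), exp (-v) ≤ 1 := fun v hv => by
    rw [exp_le_one_iff]; have := H.one_le; have : u 0 < v := hv; linarith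
  have hψ'm : AEStronglyMeasurable ψ' (volume.restrict (Ioi (u 0))) := by
    refine AEStronglyMeasurable.mul ?_ (hi'.sub hi).aestronglyMeasurable
    exact (by fun_prop : Continuous fun v : ℝ => ((exp (-v) : ℝ) : ℂ)).aestronglyMeasurable
  have hψ'i : IntegrableOn ψ' (Ioi (u 0)) := by
    refine Integrable.mono (hi'.sub hi) hψ'm ?_
    filter_upwards [ae_restrict_mem measurableSet_Ioi] with v hv
    simp only [ψ', norm_mul, Complex.norm_real, Real.norm_eq_abs, abs_exp, Pi.sub_apply]
    exact mul_le_of_le_one_left (norm_nonneg _) (hexp1 v hv)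
  have hψl : Tendsto ψ atTop (𝓝 0) := by
    have h1 : Tendsto (fun v : ℝ => ((exp (-v) : ℝ) : ℂ)) atTop (𝓝 ((0 : ℝ) : ℂ)) :=
      (Complex.continuous_ofReal.tendsto 0).comp tendsto_exp_neg_atTop_nhds_zero
    have h2 := h1.mul hl
    rw [Complex.ofReal_zero, zero_mul] at h2
    exact h2
  have hcm : Measurable (count u a) := (count_mono H.top H.pos).measurable
  have hns : ∀ v, ‖ψ' v‖ = exp (-v) * ‖χ' v - χ v‖ := fun v => by
    simp only [ψ', norm_mul, Complex.norm_real, Real.norm_eq_abs, abs_exp]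
  have hsum : HasSum (fun k => ∫ v in Ioi (u 0), if u k ≤ v then -(a k : ℂ) * ψ' v else 0)
      (∫ v in Ioi (u 0), -((count u a v : ℝ) : ℂ) * ψ' v) := by
    refine hasSum_integral_of_dominated_convergence
      (fun k v => (if u k ≤ v then a k else 0) * ‖ψ' v‖) ?_ ?_ ?_ ?_ ?_
    · intro k
      have : (fun v => if u k ≤ v then -(a k : ℂ) * ψ' v else 0)
          = (Ici (u k)).indicator (fun v => -(a k : ℂ) * ψ' v) := by
        ext v; simp [indicator_apply]
      rw [this]
      exact (hψ'm.const_mul _).indicator measurableSet_Ici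
    · intro k
      refine Eventually.of_forall fun v => ?_
      split_ifs
      · simp [abs_of_pos (H.pos k)]
      · simp
    · exact Eventually.of_forall fun v => (summable_count H.top v).mul_right _
    · simp_rw [tsum_mul_right]
      change Integrable (fun v => count u a v * ‖ψ' v‖) _
      refine Integrable.mono' (((hi'.sub hi).norm).const_mul (ρ + C))
        (hcm.aestronglyMeasurable.mul hψ'm.norm) ?_
      filter_upwards [ae_restrict_mem measurableSet_Ioi] with v hv
      rw [norm_mul, norm_norm, Real.norm_eq_abs, abs_of_nonneg (count_nonneg H.pos v), hns]
      have h1 := H.count_le (le_of_lt hv)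
      have h2 : exp v * exp (-v) = 1 := by rw [← exp_add]; simp
      calc count u a v * (exp (-v) * ‖χ' v - χ v‖)
          ≤ ((ρ + C) * exp v) * (exp (-v) * ‖χ' v - χ v‖) := by gcongr
        _ = (ρ + C) * ‖χ' v - χ v‖ * (exp v * exp (-v)) := by ring
        _ = _ := by rw [h2, mul_one]; rfl
    · refine Eventually.of_forall fun v => ?_
      have h1 := Complex.hasSum_ofReal.2 (summable_count (a := a) H.top v).hasSum
      have h2 := (h1.neg).mul_right (ψ' v)
      change HasSum _ (-((∑' k, if u k ≤ v then a k else 0 : ℝ) : ℂ) * ψ' v)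
      have h3 : (fun k => if u k ≤ v then -(a k : ℂ) * ψ' v else 0)
          = fun k => -((if u k ≤ v then a k else 0 : ℝ) : ℂ) * ψ' v := by
        ext k
        split_ifs <;> simp
      rw [h3]
      exact h2
  have hterm : ∀ k, (∫ v in Ioi (u 0), if u k ≤ v then -(a k : ℂ) * ψ' v else 0)
      = ((a k * exp (-u k) : ℝ) : ℂ) * χ (u k) := by
    intro k
    have h1 : (fun v => if u k ≤ v then -(a k : ℂ) * ψ' v else 0)
        = (Ici (u k)).indicator (fun v => -(a k : ℂ) * ψ' v) := by
      ext v; simp [indicator_apply]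
    have h2 : ∫ v in Ioi (u k), ψ' v = 0 - ψ (u k) :=
      integral_Ioi_of_hasDerivAt_of_tendsto' (fun v hv => hψ v ((H.le_u k).trans hv))
        (hψ'i.mono_set (Ioi_subset_Ioi (H.le_u k))) hψl
    rw [h1, integral_indicator measurableSet_Ici, Measure.restrict_restrict measurableSet_Ici,
      integral_const_mul]
    have h3 : (volume : Measure ℝ).restrict (Ici (u k) ∩ Ioi (u 0)) =
        volume.restrict (Ioi (u k)) := by
      rcases eq_or_ne k 0 with rfl | hk
      · rw [inter_eq_right.2 Ioi_subset_Ici_self]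
      · have : u 0 < u k := H.mono (Nat.pos_of_ne_zero hk)
        have h4 : Ici (u k) ⊆ Ioi (u 0) := fun v hv => this.trans_le hv
        rw [inter_eq_left.2 h4]
        exact Measure.restrict_congr_set Ioi_ae_eq_Ici.symm
    rw [h3, h2]
    simp only [ψ]
    push_cast
    ring
  simp_rw [hterm] at hsum
  refine ⟨hsum.summable, ?_⟩
  -- The main term is the same integral with `count` replaced by `ρ (e^v - e^{u 0})`.
  have hexpi : IntegrableOn (fun v => ((exp v - exp (u 0) : ℝ) : ℂ) * ψ' v) (Ioi (u 0)) := by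
    refine Integrable.mono (hi'.sub hi) (AEStronglyMeasurable.mul
      (by fun_prop : Continuous fun v : ℝ => ((exp v - exp (u 0) : ℝ) : ℂ)).aestronglyMeasurable
      hψ'm) ?_
    filter_upwards [ae_restrict_mem measurableSet_Ioi] with v hv
    have h0 : exp (u 0) ≤ exp v := exp_le_exp.2 (le_of_lt hv)
    rw [norm_mul, hns, Complex.norm_real, Real.norm_eq_abs, abs_of_nonneg (by linarith),
      Pi.sub_apply]
    have h2 : exp v * exp (-v) = 1 := by rw [← exp_add]; simp
    calc (exp v - exp (u 0)) * (exp (-v) * ‖χ' v - χ v‖)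
        ≤ exp v * (exp (-v) * ‖χ' v - χ v‖) := by
          gcongr; linarith [exp_pos (u 0)]
      _ = (exp v * exp (-v)) * ‖χ' v - χ v‖ := by ring
      _ = _ := by rw [h2, one_mul]
  have hexpi' : IntegrableOn (fun v => -((exp v - exp (u 0) : ℝ) : ℂ) * ψ' v) (Ioi (u 0)) :=
    hexpi.neg.congr (Eventually.of_forall fun v => by simp only [Pi.neg_apply, neg_mul])
  have hmain : ∫ v in Ioi (u 0), χ v =
      ∫ v in Ioi (u 0), -((exp v - exp (u 0) : ℝ) : ℂ) * ψ' v := by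
    have hcancel : ∀ v, ((exp v : ℝ) : ℂ) * ψ v = χ v := fun v => by
      simp only [ψ]
      rw [← mul_assoc, ← Complex.ofReal_mul, ← exp_add]
      simp
    have h1 := integral_Ioi_of_hasDerivAt_of_tendsto' (a := u 0) (m := 0)
      (f := fun v => ((exp v - exp (u 0) : ℝ) : ℂ) * ψ v)
      (f' := fun v => χ v + ((exp v - exp (u 0) : ℝ) : ℂ) * ψ' v) ?_ (hi.add hexpi) ?_
    · rw [integral_add hi hexpi] at h1
      simp only [sub_self, Complex.ofReal_zero, zero_mul] at h1
      simp_rw [neg_mul]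
      rw [integral_neg]
      linear_combination h1
    · intro v hv
      have h2 : HasDerivAt (fun v : ℝ => ((exp v - exp (u 0) : ℝ) : ℂ)) ((exp v : ℝ) : ℂ) v :=
        ((hasDerivAt_exp v).sub_const _).ofReal_comp
      have h3 := h2.mul (hψ v hv)
      rw [hcancel] at h3
      exact h3
    · have h2 : (fun v => ((exp v - exp (u 0) : ℝ) : ℂ) * ψ v)
          = fun v => χ v - (exp (u 0) : ℝ) * ψ v := by
        ext v
        rw [← hcancel v]
        push_cast
        ring
      rw [h2]
      simpa using hl.sub (hψl.const_mul _)
  have hci : IntegrableOn (fun v => -((count u a v : ℝ) : ℂ) * ψ' v) (Ioi (u 0)) := by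
    refine Integrable.mono' (((hi'.sub hi).norm).const_mul (ρ + C))
      (AEStronglyMeasurable.mul
        (Complex.measurable_ofReal.comp hcm).neg.aestronglyMeasurable hψ'm) ?_
    filter_upwards [ae_restrict_mem measurableSet_Ioi] with v hv
    rw [norm_mul, norm_neg, Complex.norm_real, Real.norm_eq_abs,
      abs_of_nonneg (count_nonneg H.pos v), hns]
    have h1 := H.count_le (le_of_lt hv)
    have h2 : exp v * exp (-v) = 1 := by rw [← exp_add]; simp
    calc count u a v * (exp (-v) * ‖χ' v - χ v‖)
        ≤ ((ρ + C) * exp v) * (exp (-v) * ‖χ' v - χ v‖) := by gcongr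
      _ = (ρ + C) * ‖χ' v - χ v‖ * (exp v * exp (-v)) := by ring
      _ = _ := by rw [h2, mul_one]; rfl
  rw [hsum.tsum_eq, hmain, ← integral_const_mul, ← integral_sub hci, ← integral_const_mul]
  · refine (norm_integral_le_integral_norm _).trans (setIntegral_mono_on ?_ ?_ measurableSet_Ioi ?_)
    · exact (hci.sub (hexpi'.const_mul (ρ : ℂ))).norm
    · refine Integrable.const_mul ?_ C
      refine Integrable.mono' (hi.norm.add hi'.norm) ((hi.norm.add
        hi'.norm).aestronglyMeasurable.mul measurable_decay.aestronglyMeasurable) ?_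
      filter_upwards [ae_restrict_mem measurableSet_Ioi] with v hv
      have hv1 : 1 ≤ v := H.one_le.trans (le_of_lt hv)
      have h0 := decay_pos (zero_lt_one.trans_le hv1)
      simp only [norm_mul, Real.norm_eq_abs, abs_of_pos h0, Pi.add_apply]
      rw [abs_of_nonneg (by positivity)]
      exact mul_le_of_le_one_right (by positivity) (decay_le_one hv1)
    · intro v hv
      have h1 : -((count u a v : ℝ) : ℂ) * ψ' v -
          (ρ : ℂ) * (-((exp v - exp (u 0) : ℝ) : ℂ) * ψ' v)
          = -((count u a v - ρ * (exp v - exp (u 0)) : ℝ) : ℂ) * ψ' v := by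
        push_cast; ring
      rw [h1, norm_mul, norm_neg, Complex.norm_real, Real.norm_eq_abs, hns]
      have h2 : exp v * exp (-v) = 1 := by rw [← exp_add]; simp
      have h0 := decay_pos (zero_lt_one.trans_le (H.one_le.trans (le_of_lt hv)))
      calc |count u a v - ρ * (exp v - exp (u 0))| * (exp (-v) * ‖χ' v - χ v‖)
          ≤ (C * (exp v * decay v)) * (exp (-v) * ‖χ' v - χ v‖) := by
            gcongr
            exact H.bound v (le_of_lt hv)
        _ = C * (‖χ' v - χ v‖ * decay v) * (exp v * exp (-v)) := by ring
        _ = C * (‖χ' v - χ v‖ * decay v) := by rw [h2, mul_one]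
        _ ≤ _ := by
          have := H.C_nonneg
          gcongr
          rw [add_comm]
          exact norm_sub_le _ _
  · exact hexpi'.const_mul (ρ : ℂ)

end LogCount

/-! ### Weighted sums and kernel sums -/

namespace LogCount
variable {u a : ℕ → ℝ} {ρ C : ℝ}

/-- The only place where the exponent `3 / 2 > 1` enters: `decay` is integrable at infinity. -/
theorem summable_decay (H : LogCount u a ρ C) :
    Summable (fun k => a k * exp (-u k) * decay (u k)) := by
  have h0 : 0 < u 0 := by linarith [H.one_le]
  have h := (H.abel (χ := fun v => (decay v : ℂ))
    (χ' := fun v => ((-(3 / 2) * v ^ (-(5 / 2) : ℝ) : ℝ) : ℂ))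
    (fun v hv => (hasDerivAt_decay (h0.trans_le hv)).ofReal_comp)
    (integrableOn_decay h0).ofReal
    (((integrableOn_Ioi_rpow_of_lt (by norm_num) h0).const_mul _).ofReal)
    (by
      have := (Complex.continuous_ofReal.tendsto 0).comp tendsto_decay
      rw [Complex.ofReal_zero] at this
      exact this)).1
  have h2 := Complex.reCLM.summable h
  refine h2.congr fun k => ?_
  rw [Complex.reCLM_apply, ← Complex.ofReal_mul, Complex.ofReal_re]

theorem hasDerivAt_cexp (η v : ℝ) :
    HasDerivAt (fun v : ℝ => ((exp (-η * v) : ℝ) : ℂ)) ((-η * exp (-η * v) : ℝ) : ℂ) v := by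
  have h1 : HasDerivAt (fun v : ℝ => exp (-η * v)) (exp (-η * v) * (-η)) v := by
    have := ((hasDerivAt_id v).const_mul (-η)).exp
    simpa using this
  rw [mul_comm (-η)]
  exact h1.ofReal_comp

theorem summable_exp (H : LogCount u a ρ C) {η : ℝ} (hη : 0 < η) (hη1 : η ≤ 1) :
    Summable (fun k => a k * exp (-u k) * exp (-η * u k)) ∧
      η * ∑' k, a k * exp (-u k) * exp (-η * u k) ≤ ρ + 2 * C := by
  have h0 : 0 < u 0 := by linarith [H.one_le]
  have hi : IntegrableOn (fun v : ℝ => exp (-η * v)) (Ioi (u 0)) :=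
    integrableOn_exp_mul_Ioi (by linarith) _
  have h := H.abel (χ := fun v => ((exp (-η * v) : ℝ) : ℂ))
    (χ' := fun v => ((-η * exp (-η * v) : ℝ) : ℂ))
    (fun v _ => hasDerivAt_cexp η v) hi.ofReal (hi.const_mul _).ofReal
    (by
      have h1 : Tendsto (fun v : ℝ => exp (-η * v)) atTop (𝓝 0) :=
        tendsto_exp_atBot.comp (tendsto_id.const_mul_atTop_of_neg (by linarith))
      have := (Complex.continuous_ofReal.tendsto 0).comp h1
      rw [Complex.ofReal_zero] at this
      exact this)
  simp_rw [← Complex.ofReal_mul] at h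
  have hs : Summable (fun k => a k * exp (-u k) * exp (-η * u k)) := Complex.summable_ofReal.1 h.1
  refine ⟨hs, ?_⟩
  have h2 := h.2
  rw [← Complex.ofReal_tsum, integral_complex_ofReal, ← Complex.ofReal_mul, ← Complex.ofReal_sub,
    Complex.norm_real, Real.norm_eq_abs] at h2
  have hI : ∫ v in Ioi (u 0), exp (-η * v) ≤ 1 / η := by
    rw [integral_exp_mul_Ioi (by linarith)]
    rw [neg_div_neg_eq]
    gcongr
    rw [exp_le_one_iff]
    nlinarith
  have hE : ∫ v in Ioi (u 0), (‖((exp (-η * v) : ℝ) : ℂ)‖ + ‖((-η * exp (-η * v) : ℝ) : ℂ)‖) *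
      decay v ≤ ∫ v in Ioi (u 0), 2 * exp (-η * v) := by
    refine integral_mono_of_nonneg ?_ (hi.const_mul 2) ?_
    · filter_upwards [ae_restrict_mem measurableSet_Ioi] with v hv
      have := decay_pos (h0.trans hv)
      simp only [Pi.zero_apply]
      positivity
    · filter_upwards [ae_restrict_mem measurableSet_Ioi] with v hv
      have h3 := decay_pos (h0.trans hv)
      have h4 := decay_le_one (H.one_le.trans (le_of_lt hv))
      rw [Complex.norm_real, Complex.norm_real, norm_mul, norm_neg, Real.norm_eq_abs, abs_exp,
        Real.norm_eq_abs, abs_of_pos hη]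
      have h5 := exp_pos (-η * v)
      calc (exp (-η * v) + η * exp (-η * v)) * decay v
          ≤ (exp (-η * v) + 1 * exp (-η * v)) * 1 := by gcongr
        _ = _ := by ring
  rw [integral_const_mul] at hE
  have h3 := (abs_le.1 h2).2
  have h4 : ∑' k, a k * exp (-u k) * exp (-η * u k) ≤ ρ * (1 / η) + C * (2 * (1 / η)) := by
    have h5 := mul_le_mul_of_nonneg_left hI H.rho.le
    have h6 := mul_le_mul_of_nonneg_left
      (hE.trans (mul_le_mul_of_nonneg_left hI zero_le_two)) H.C_nonneg
    linarith
  calc _ ≤ η * (ρ * (1 / η) + C * (2 * (1 / η))) := by gcongr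
    _ = _ := by field_simp

end LogCount

theorem integrable_scale {E : Type*} [NormedAddCommGroup E] {f : ℝ → E} (hf : Integrable f)
    {T : ℝ} (hT : 1 ≤ T) (x : ℝ) : Integrable (fun v => f (T * (x - v))) :=
  (hf.comp_mul_left' (by linarith : T ≠ 0)).comp_sub_left x

theorem integral_scale {E : Type*} [NormedAddCommGroup E] [NormedSpace ℝ E] (f : ℝ → E)
    {T : ℝ} (hT : 1 ≤ T) (x : ℝ) : ∫ v, f (T * (x - v)) = T⁻¹ • ∫ v, f v := by
  rw [integral_sub_left_eq_self (fun v => f (T * v)) volume x, Measure.integral_comp_mul_left,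
    abs_of_pos (by positivity)]

theorem abs_exp_sub_le {η v x : ℝ} (hη : 0 < η) (hv : 0 ≤ v) (hx : 0 ≤ x) :
    |exp (-η * v) - exp (-η * x)| ≤ η * |x - v| := by
  wlog h : v ≤ x generalizing v x
  · rw [abs_sub_comm, abs_sub_comm x v]
    exact this hx hv (le_of_not_ge h)
  have h1 : exp (-η * x) ≤ exp (-η * v) := exp_le_exp.2 (by nlinarith)
  rw [abs_of_nonneg (by linarith), abs_of_nonneg (by linarith)]
  have h2 : exp (-η * x) = exp (-η * v) * exp (-(η * (x - v))) := by
    rw [← exp_add]; congr 1; ring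
  have h3 := one_sub_le_exp_neg (η * (x - v))
  have h4 : exp (-η * v) ≤ 1 := by rw [exp_le_one_iff]; nlinarith
  have h5 : 0 ≤ η * (x - v) := mul_nonneg hη.le (by linarith)
  have h6 := exp_pos (-η * v)
  nlinarith

/-- The sum of `κ (T (x - u k))` against the weights `a k e^{-(1+η) u k}`: the main term
`ρ ∫ κ` vanishes up to edge effects of relative size `1/T`, which leaves the error
`C * decay x` of the counting function. -/
theorem LogCount.kernel_sum_le {u a : ℕ → ℝ} {ρ C : ℝ} (H : LogCount u a ρ C)
    {w : ℝ → ℝ} {κ κ' : ℝ → ℂ} (hκ : Kern w κ κ') {M : ℝ}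
    (hM0 : ∫ x, ‖κ x‖ * (1 + |x|) ^ 2 ≤ M) (hM1 : ∫ x, ‖κ' x‖ * (1 + |x|) ^ 2 ≤ M)
    {η T x : ℝ} (hη : 0 < η) (hη1 : η ≤ 1) (hT : 1 ≤ T) (hx : u 0 ≤ x) :
    ‖∑' k, ((a k * exp (-u k) * exp (-η * u k) : ℝ) : ℂ) * κ (T * (x - u k))‖ ≤
      M * (3 * C * decay x + ρ * (η / T) + ρ * (decay x / (decay (u 0) * T))) := by
  have hT0 : 0 < T := by linarith
  have h0 : 0 < u 0 := by linarith [H.one_le]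
  have hx0 : 0 < x := by linarith
  have hx1 : 1 ≤ x := H.one_le.trans hx
  have hu1 := H.one_le
  have hdx := decay_pos hx0
  have hdu := decay_pos h0
  have hM : 0 ≤ M := le_trans (integral_nonneg fun x => by positivity) hM0
  let χ : ℝ → ℂ := fun v => ((exp (-η * v) : ℝ) : ℂ) * κ (T * (x - v))
  let χ' : ℝ → ℂ := fun v => ((-η * exp (-η * v) : ℝ) : ℂ) * κ (T * (x - v)) +
    ((exp (-η * v) : ℝ) : ℂ) * (-T * κ' (T * (x - v)))
  have hexp1 : ∀ v, u 0 < v → exp (-η * v) ≤ 1 := fun v hv => by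
    rw [exp_le_one_iff]; nlinarith
  have hκi := integrable_scale hκ.int hT x
  have hκ'i := integrable_scale hκ.int' hT x
  have hN0i := integrable_scale hκ.int0 hT x
  have hN1i := integrable_scale hκ.int1 hT x
  have hN0 := integral_scale (fun y => ‖κ y‖ * (1 + |y|) ^ 2) hT x
  have hN1 := integral_scale (fun y => ‖κ' y‖ * (1 + |y|) ^ 2) hT x
  rw [smul_eq_mul] at hN0 hN1
  have hN0M : ∫ v, ‖κ (T * (x - v))‖ * (1 + |T * (x - v)|) ^ 2 ≤ M / T := by
    rw [hN0, inv_mul_eq_div]; gcongr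
  have hN1M : ∫ v, ‖κ' (T * (x - v))‖ * (1 + |T * (x - v)|) ^ 2 ≤ M / T := by
    rw [hN1, inv_mul_eq_div]; gcongr
  have hce : Continuous (fun v : ℝ => ((exp (-η * v) : ℝ) : ℂ)) := by fun_prop
  have hce' : Continuous (fun v : ℝ => ((-η * exp (-η * v) : ℝ) : ℂ)) := by fun_prop
  have hbe : ∀ᵐ v ∂(volume.restrict (Ioi (u 0))), ‖((exp (-η * v) : ℝ) : ℂ)‖ ≤ 1 := by
    filter_upwards [ae_restrict_mem measurableSet_Ioi] with v hv
    rw [Complex.norm_real, Real.norm_eq_abs, abs_exp]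
    exact hexp1 v hv
  have hbe' : ∀ᵐ v ∂(volume.restrict (Ioi (u 0))), ‖((-η * exp (-η * v) : ℝ) : ℂ)‖ ≤ 1 := by
    filter_upwards [ae_restrict_mem measurableSet_Ioi] with v hv
    rw [Complex.norm_real, norm_mul, norm_neg, Real.norm_eq_abs, Real.norm_eq_abs, abs_exp,
      abs_of_pos hη]
    exact mul_le_one₀ hη1 (exp_pos _).le (hexp1 v hv)
  have hi : IntegrableOn χ (Ioi (u 0)) :=
    hκi.integrableOn.bdd_mul hce.aestronglyMeasurable hbe
  have hi' : IntegrableOn χ' (Ioi (u 0)) :=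
    (hκi.integrableOn.bdd_mul hce'.aestronglyMeasurable hbe').add
      ((hκ'i.integrableOn.const_mul (-T : ℂ)).bdd_mul hce.aestronglyMeasurable hbe)
  have hd : ∀ v, u 0 ≤ v → HasDerivAt χ (χ' v) v := by
    intro v _
    have h1 : HasDerivAt (fun v : ℝ => T * (x - v)) (-T) v := by
      simpa using ((hasDerivAt_id v).const_sub x).const_mul T
    have h2 := (hκ.der (T * (x - v))).scomp v h1
    have h3 := (LogCount.hasDerivAt_cexp η v).mul h2
    have h4 : χ' v = ((-η * exp (-η * v) : ℝ) : ℂ) * κ (T * (x - v)) +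
      ((exp (-η * v) : ℝ) : ℂ) * ((-T : ℝ) • κ' (T * (x - v))) := by
      simp [χ']
    rw [h4]
    exact h3
  have hl : Tendsto χ atTop (𝓝 0) := by
    have h1 : Tendsto (fun v : ℝ => exp (-η * v)) atTop (𝓝 0) :=
      tendsto_exp_atBot.comp (tendsto_id.const_mul_atTop_of_neg (by linarith))
    have h2 := (Complex.continuous_ofReal.tendsto 0).comp h1
    have h3 : Tendsto (fun v : ℝ => T * (x - v)) atTop atBot :=
      (tendsto_const_mul_atBot_of_pos hT0).2
        (tendsto_atBot_add_const_left _ x tendsto_neg_atTop_atBot)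
    have h4 := h2.mul (hκ.lim.comp h3)
    rw [mul_zero] at h4
    exact h4
  have hab := (H.abel hd hi hi' hl).2
  have hone : ∀ v, |x - v| ≤ |T * (x - v)| := fun v => by
    rw [abs_mul, abs_of_pos hT0]
    exact le_mul_of_one_le_left (abs_nonneg _) hT
  have hE : ∫ v in Ioi (u 0), (‖χ v‖ + ‖χ' v‖) * decay v ≤ 3 * M * decay x := by
    let G : ℝ → ℝ := fun v => decay x * (2 * (‖κ (T * (x - v))‖ * (1 + |T * (x - v)|) ^ 2) +
      T * (‖κ' (T * (x - v))‖ * (1 + |T * (x - v)|) ^ 2))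
    have hG : Integrable G := ((hN0i.const_mul 2).add (hN1i.const_mul T)).const_mul _
    have hG0 : ∀ v, 0 ≤ G v := fun v => by positivity
    have h1 : ∫ v in Ioi (u 0), (‖χ v‖ + ‖χ' v‖) * decay v ≤ ∫ v in Ioi (u 0), G v := by
      refine integral_mono_of_nonneg ?_ hG.integrableOn ?_
      · filter_upwards [ae_restrict_mem measurableSet_Ioi] with v hv
        have := decay_pos (h0.trans hv)
        simp only [Pi.zero_apply]
        positivity
      · filter_upwards [ae_restrict_mem measurableSet_Ioi, hbe, hbe'] with v hv he he'
        have hv1 : 1 ≤ v := hu1.trans (le_of_lt hv)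
        have h2 : decay v ≤ decay x * (1 + |T * (x - v)|) ^ 2 := by
          refine (decay_le_mul hx1 hv1).trans ?_
          have := hone v
          gcongr
        have h3 : ‖χ v‖ ≤ ‖κ (T * (x - v))‖ := by
          simp only [χ, norm_mul]
          exact mul_le_of_le_one_left (norm_nonneg _) he
        have h4 : ‖χ' v‖ ≤ ‖κ (T * (x - v))‖ + T * ‖κ' (T * (x - v))‖ := by
          refine (norm_add_le _ _).trans ?_
          rw [norm_mul, norm_mul, norm_mul, norm_neg, Complex.norm_real T, Real.norm_eq_abs,
            abs_of_pos hT0]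
          exact add_le_add (mul_le_of_le_one_left (norm_nonneg _) he')
            (mul_le_of_le_one_left (by positivity) he)
        have h5 := decay_pos (h0.trans hv)
        calc (‖χ v‖ + ‖χ' v‖) * decay v
            ≤ (‖κ (T * (x - v))‖ + (‖κ (T * (x - v))‖ + T * ‖κ' (T * (x - v))‖)) *
              (decay x * (1 + |T * (x - v)|) ^ 2) := by gcongr
          _ = G v := by simp only [G]; ring
    have h2 : ∫ v in Ioi (u 0), G v ≤ ∫ v, G v :=
      setIntegral_le_integral hG (Eventually.of_forall hG0)
    have h3 : ∫ v, G v ≤ decay x * (2 * (M / T) + T * (M / T)) := by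
      simp only [G]
      rw [integral_const_mul, integral_add (hN0i.const_mul 2) (hN1i.const_mul T),
        integral_const_mul, integral_const_mul]
      gcongr
    have h4 : M / T ≤ M := div_le_self hM hT
    have h5 : T * (M / T) = M := by field_simp
    rw [h5] at h3
    nlinarith
  have hmain : ‖∫ v in Ioi (u 0), χ v‖ ≤ M * (η / T) + M * (decay x / (decay (u 0) * T)) := by
    have hsplit : ∫ v in Ioi (u 0), χ v =
        (∫ v in Ioi (u 0), ((exp (-η * v) - exp (-η * x) : ℝ) : ℂ) * κ (T * (x - v))) +
        ((exp (-η * x) : ℝ) : ℂ) * ∫ v in Ioi (u 0), κ (T * (x - v)) := by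
      rw [← integral_const_mul, ← integral_add]
      · congr 1
        ext v
        simp only [χ]
        push_cast
        ring
      · refine (hi.sub (hκi.integrableOn.const_mul ((exp (-η * x) : ℝ) : ℂ))).congr
          (Eventually.of_forall fun v => ?_)
        simp only [χ, Pi.sub_apply]
        push_cast
        ring
      · exact hκi.integrableOn.const_mul _
    have hfirst : ‖∫ v in Ioi (u 0), ((exp (-η * v) - exp (-η * x) : ℝ) : ℂ) * κ (T * (x - v))‖
        ≤ M * (η / T) := by
      have h1 : ‖∫ v in Ioi (u 0), ((exp (-η * v) - exp (-η * x) : ℝ) : ℂ) * κ (T * (x - v))‖ ≤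
          ∫ v in Ioi (u 0), η * (‖κ (T * (x - v))‖ * (1 + |T * (x - v)|) ^ 2) := by
        refine norm_integral_le_of_norm_le (hN0i.const_mul η).integrableOn ?_
        filter_upwards [ae_restrict_mem measurableSet_Ioi] with v hv
        rw [norm_mul, Complex.norm_real, Real.norm_eq_abs]
        have h2 := abs_exp_sub_le hη (h0.trans hv).le hx0.le
        have h3 : |x - v| ≤ (1 + |T * (x - v)|) ^ 2 := by
          nlinarith [hone v, abs_nonneg (x - v), abs_nonneg (T * (x - v))]
        calc |exp (-η * v) - exp (-η * x)| * ‖κ (T * (x - v))‖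
            ≤ (η * (1 + |T * (x - v)|) ^ 2) * ‖κ (T * (x - v))‖ := by
              gcongr
              exact h2.trans (by gcongr)
          _ = _ := by ring
      refine h1.trans ((setIntegral_le_integral (hN0i.const_mul η)
        (Eventually.of_forall fun v => by positivity)).trans ?_)
      rw [integral_const_mul]
      calc _ ≤ η * (M / T) := by gcongr
        _ = _ := by ring
    have hsecond : ‖∫ v in Ioi (u 0), κ (T * (x - v))‖ ≤
        M * (decay x / (decay (u 0) * T)) := by
      have h1 : ∫ v in Ioi (u 0), κ (T * (x - v)) = -∫ v in Iic (u 0), κ (T * (x - v)) := by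
        have h2 := integral_add_compl (s := Iic (u 0)) measurableSet_Iic hκi
        rw [integral_scale κ hT x, hκ.zero, smul_zero, compl_Iic] at h2
        linear_combination h2
      rw [h1, norm_neg]
      have h2 : ‖∫ v in Iic (u 0), κ (T * (x - v))‖ ≤
          ∫ v in Iic (u 0), decay x / decay (u 0) *
            (‖κ (T * (x - v))‖ * (1 + |T * (x - v)|) ^ 2) := by
        refine norm_integral_le_of_norm_le (hN0i.const_mul _).integrableOn ?_
        filter_upwards [ae_restrict_mem measurableSet_Iic] with v hv
        have hv' : v ≤ u 0 := hv
        have h3 : decay (u 0) ≤ decay x * (1 + |T * (x - v)|) ^ 2 := by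
          refine (decay_le_mul hx1 hu1).trans ?_
          have h4 : |x - u 0| ≤ |T * (x - v)| := by
            refine le_trans ?_ (hone v)
            rw [abs_of_nonneg (by linarith), abs_of_nonneg (by linarith)]
            linarith
          gcongr
        have h5 : 1 ≤ decay x / decay (u 0) * (1 + |T * (x - v)|) ^ 2 := by
          rw [div_mul_eq_mul_div, le_div_iff₀ hdu, one_mul]
          exact h3
        calc ‖κ (T * (x - v))‖ = ‖κ (T * (x - v))‖ * 1 := by ring
          _ ≤ ‖κ (T * (x - v))‖ * (decay x / decay (u 0) * (1 + |T * (x - v)|) ^ 2) := by gcongr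
          _ = _ := by ring
      refine h2.trans ((setIntegral_le_integral (hN0i.const_mul _)
        (Eventually.of_forall fun v => by positivity)).trans ?_)
      rw [integral_const_mul]
      calc _ ≤ decay x / decay (u 0) * (M / T) := by gcongr
        _ = _ := by field_simp
    rw [hsplit]
    refine (norm_add_le _ _).trans (add_le_add hfirst ?_)
    rw [norm_mul, Complex.norm_real, Real.norm_eq_abs, abs_exp]
    refine (mul_le_of_le_one_left (norm_nonneg _) ?_).trans hsecond
    rw [exp_le_one_iff]
    nlinarith
  have hsum : ∑' k, ((a k * exp (-u k) * exp (-η * u k) : ℝ) : ℂ) * κ (T * (x - u k)) =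
      ∑' k, ((a k * exp (-u k) : ℝ) : ℂ) * χ (u k) := by
    congr 1
    ext k
    simp only [χ]
    push_cast
    ring
  rw [hsum]
  have h1 := norm_le_norm_sub_add (∑' k, ((a k * exp (-u k) : ℝ) : ℂ) * χ (u k))
    (ρ * ∫ v in Ioi (u 0), χ v)
  rw [norm_mul, Complex.norm_real, Real.norm_eq_abs, abs_of_pos H.rho] at h1
  have h2 := mul_le_mul_of_nonneg_left hmain H.rho.le
  have h3 := mul_le_mul_of_nonneg_left hE H.C_nonneg
  calc _ ≤ C * (3 * M * decay x) +
        ρ * (M * (η / T) + M * (decay x / (decay (u 0) * T))) := by linarith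
    _ = _ := by ring

/-! ### The mean square of an exponential sum -/

/-- Mean square of an absolutely convergent exponential sum, bounded through its kernel sums:
`1` is majorized by the weight `w` on `[1, 2]` and the square is expanded. -/
theorem quad_le {w : ℝ → ℝ} {κ κ' : ℝ → ℂ} (hκ : Kern w κ κ') {c u β : ℕ → ℝ} {T : ℝ}
    (hc : ∀ k, 0 ≤ c k) (hcs : Summable c)
    (hβ : ∀ j, ‖∑' k, (c k : ℂ) * κ (T * (u j - u k))‖ ≤ β j)
    (hs : Summable fun j => c j * β j) :
    ∫ τ in (1 : ℝ)..2, ‖∑' k, (c k : ℂ) *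
        Complex.exp (-(2 * π * τ * (T * u k) : ℝ) * Complex.I)‖ ^ 2 ≤
      ∑' j, c j * β j := by
  let e : ℕ → ℝ → ℂ := fun k τ => Complex.exp (-(2 * π * τ * (T * u k) : ℝ) * Complex.I)
  let g : ℝ → ℂ := fun τ => ∑' k, (c k : ℂ) * e k τ
  have hen : ∀ k τ, ‖e k τ‖ = 1 := fun k τ => by
    simp only [e]
    rw [← Complex.ofReal_neg, Complex.norm_exp_ofReal_mul_I]
  have hec : ∀ k, Continuous (e k) := fun k => by simp only [e]; fun_prop
  have hce : ∀ k τ, ‖(c k : ℂ) * e k τ‖ = c k := fun k τ => by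
    rw [norm_mul, hen, mul_one, Complex.norm_real, Real.norm_eq_abs, abs_of_nonneg (hc k)]
  have hgs : ∀ τ, HasSum (fun k => (c k : ℂ) * e k τ) (g τ) := fun τ =>
    (Summable.of_norm (by simp_rw [hce]; exact hcs)).hasSum
  have hgc : Continuous g :=
    continuous_tsum (fun k => continuous_const.mul (hec k)) hcs fun k τ => (hce k τ).le
  have hgn : ∀ τ, ‖g τ‖ ≤ ∑' k, c k := fun τ => by
    refine (norm_tsum_le_tsum_norm (by simp_rw [hce]; exact hcs)).trans ?_
    simp_rw [hce]; exact le_rfl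
  have hwc : Continuous fun τ => (w τ : ℂ) := Complex.continuous_ofReal.comp hκ.w_cont
  have hwn : ∀ τ, ‖(w τ : ℂ)‖ = w τ := fun τ => by
    rw [Complex.norm_real, Real.norm_eq_abs, abs_of_nonneg (hκ.w_nonneg τ)]
  have hpair : ∀ j k, ∫ τ, (w τ : ℂ) * (e j τ * starRingEnd ℂ ((c k : ℂ) * e k τ)) =
      (c k : ℂ) * κ (T * (u j - u k)) := by
    intro j k
    rw [hκ.fourier, ← integral_const_mul]
    congr 1
    ext τ
    have : e j τ * starRingEnd ℂ (e k τ) =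
        Complex.exp (-(2 * π * τ * (T * (u j - u k)) : ℝ) * Complex.I) := by
      simp only [e]
      rw [← Complex.exp_conj, ← Complex.exp_add]
      congr 1
      simp only [map_mul, map_neg, Complex.conj_ofReal, Complex.conj_I]
      push_cast
      ring
    rw [map_mul, Complex.conj_ofReal, ← this]
    ring
  have hinner : ∀ j, HasSum (fun k => (c k : ℂ) * κ (T * (u j - u k)))
      (∫ τ, (w τ : ℂ) * (e j τ * starRingEnd ℂ (g τ))) := by
    intro j
    simp_rw [← hpair]
    refine hasSum_integral_of_dominated_convergence (fun k τ => c k * w τ) ?_ ?_ ?_ ?_ ?_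
    · intro k
      exact (hwc.mul ((hec j).mul
        (Complex.continuous_conj.comp (continuous_const.mul (hec k))))).aestronglyMeasurable
    · intro k
      refine Eventually.of_forall fun τ => ?_
      rw [norm_mul, norm_mul, hwn, hen, RCLike.norm_conj, hce]
      linarith
    · exact Eventually.of_forall fun τ => hcs.mul_right _
    · simp_rw [tsum_mul_right]
      exact hκ.w_int.const_mul _
    · exact Eventually.of_forall fun τ =>
        ((Complex.hasSum_conj'.2 (by simpa using hgs τ)).mul_left _).mul_left _
  have houter : HasSum (fun j => (c j : ℂ) * ∫ τ, (w τ : ℂ) * (e j τ * starRingEnd ℂ (g τ)))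
      (∫ τ, (w τ : ℂ) * (g τ * starRingEnd ℂ (g τ))) := by
    have h1 : ∀ j, (c j : ℂ) * ∫ τ, (w τ : ℂ) * (e j τ * starRingEnd ℂ (g τ)) =
        ∫ τ, (w τ : ℂ) * ((c j : ℂ) * e j τ * starRingEnd ℂ (g τ)) := fun j => by
      rw [← integral_const_mul]
      congr 1
      ext τ
      ring
    simp_rw [h1]
    refine hasSum_integral_of_dominated_convergence (fun j τ => c j * (w τ * ∑' k, c k))
      ?_ ?_ ?_ ?_ ?_
    · intro j
      exact (hwc.mul ((continuous_const.mul (hec j)).mul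
        (Complex.continuous_conj.comp hgc))).aestronglyMeasurable
    · intro j
      refine Eventually.of_forall fun τ => ?_
      rw [norm_mul, norm_mul, hwn, hce, RCLike.norm_conj]
      have h2 := mul_le_mul_of_nonneg_left (hgn τ) (mul_nonneg (hc j) (hκ.w_nonneg τ))
      linarith
    · exact Eventually.of_forall fun τ => hcs.mul_right _
    · simp_rw [tsum_mul_right]
      exact (hκ.w_int.mul_const _).const_mul _
    · exact Eventually.of_forall fun τ => ((hgs τ).mul_right _).mul_left _
  have hsq : ∫ τ, (w τ : ℂ) * (g τ * starRingEnd ℂ (g τ)) =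
      ((∫ τ, w τ * ‖g τ‖ ^ 2 : ℝ) : ℂ) := by
    rw [← integral_complex_ofReal]
    congr 1
    ext τ
    rw [Complex.mul_conj, Complex.normSq_eq_norm_sq]
    push_cast
    ring
  have hterm : ∀ j, ‖(c j : ℂ) * ∫ τ, (w τ : ℂ) * (e j τ * starRingEnd ℂ (g τ))‖ ≤ c j * β j := by
    intro j
    rw [norm_mul, Complex.norm_real, Real.norm_eq_abs, abs_of_nonneg (hc j), ← (hinner j).tsum_eq]
    exact mul_le_mul_of_nonneg_left (hβ j) (hc j)
  have hfull : ∫ τ, w τ * ‖g τ‖ ^ 2 ≤ ∑' j, c j * β j := by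
    have h1 := tsum_of_norm_bounded hs.hasSum hterm
    rw [houter.tsum_eq, hsq, Complex.norm_real, Real.norm_eq_abs] at h1
    exact (le_abs_self _).trans h1
  refine le_trans ?_ hfull
  have hint : Integrable fun τ => w τ * ‖g τ‖ ^ 2 := by
    refine hκ.w_int.mul_bdd (c := (∑' k, c k) ^ 2) (hgc.norm.pow 2).aestronglyMeasurable
      (Eventually.of_forall fun τ => ?_)
    rw [norm_pow, norm_norm]
    have := hgn τ
    gcongr
  rw [intervalIntegral.integral_of_le (by norm_num)]
  calc ∫ τ in Ioc (1 : ℝ) 2, ‖g τ‖ ^ 2 = ∫ τ in Ioc (1 : ℝ) 2, w τ * ‖g τ‖ ^ 2 := by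
        refine setIntegral_congr_fun measurableSet_Ioc fun τ hτ => ?_
        rw [hκ.w_one τ ⟨hτ.1.le, hτ.2⟩, one_mul]
    _ ≤ _ := setIntegral_le_integral hint
        (Eventually.of_forall fun τ => mul_nonneg (hκ.w_nonneg τ) (by positivity))

/-- The mean square of a tail just to the right of the boundary line, uniformly in the distance
`η` to it: the `η` in the kernel bound compensates the growth of the sum of the weights. -/
theorem LogCount.mean_square_le {u a : ℕ → ℝ} {ρ C : ℝ} (H : LogCount u a ρ C)
    {w : ℝ → ℝ} {κ κ' : ℝ → ℂ} (hκ : Kern w κ κ') {M : ℝ}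
    (hM0 : ∫ x, ‖κ x‖ * (1 + |x|) ^ 2 ≤ M) (hM1 : ∫ x, ‖κ' x‖ * (1 + |x|) ^ 2 ≤ M)
    {η T : ℝ} (hη : 0 < η) (hη1 : η ≤ 1) (hT : 1 ≤ T) :
    ∫ τ in (1 : ℝ)..2, ‖∑' k, ((a k * exp (-u k) * exp (-η * u k) : ℝ) : ℂ) *
        Complex.exp (-(2 * π * τ * (T * u k) : ℝ) * Complex.I)‖ ^ 2 ≤
      M * (3 * C * (∑' k, a k * exp (-u k) * decay (u k)) + ρ * (ρ + 2 * C) / T +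
        ρ * (∑' k, a k * exp (-u k) * decay (u k)) / (decay (u 0) * T)) := by
  have hT0 : 0 < T := by linarith
  have hM : 0 ≤ M := le_trans (integral_nonneg fun x => by positivity) hM0
  have hC := H.C_nonneg
  have hρ := H.rho
  have hdu : 0 < decay (u 0) := decay_pos (by linarith [H.one_le])
  obtain ⟨hs, hle⟩ := H.summable_exp hη hη1
  have hpos : ∀ k, 0 ≤ a k * exp (-u k) * exp (-η * u k) := fun k => by
    have := H.pos k; positivity
  have hsd := H.summable_decay
  have hcd : ∀ k, a k * exp (-u k) * exp (-η * u k) * decay (u k) ≤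
      a k * exp (-u k) * decay (u k) := fun k => by
    have h1 := H.pos k
    have h2 := H.one_le_u k
    have h3 : 0 < decay (u k) := decay_pos (by linarith)
    have h4 : exp (-η * u k) ≤ 1 := by rw [exp_le_one_iff]; nlinarith
    have h5 : 0 < a k * exp (-u k) := by positivity
    calc _ ≤ a k * exp (-u k) * 1 * decay (u k) := by gcongr
      _ = _ := by ring
  have hsd' : Summable fun k => a k * exp (-u k) * exp (-η * u k) * decay (u k) :=
    hsd.of_nonneg_of_le (fun k => mul_nonneg (hpos k)
      (decay_pos (by linarith [H.one_le_u k])).le) hcd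
  have htd := hsd'.tsum_le_tsum hcd hsd
  -- The kernel bound has the shape `A * decay (u j) + B`.
  let A := M * 3 * C + M * ρ / (decay (u 0) * T)
  let B := M * ρ * (η / T)
  have hβ : ∀ j, M * (3 * C * decay (u j) + ρ * (η / T) +
      ρ * (decay (u j) / (decay (u 0) * T))) = A * decay (u j) + B := fun j => by
    simp only [A, B]; ring
  have hcβ : ∀ j, a j * exp (-u j) * exp (-η * u j) * (M * (3 * C * decay (u j) + ρ * (η / T) +
      ρ * (decay (u j) / (decay (u 0) * T)))) =
      A * (a j * exp (-u j) * exp (-η * u j) * decay (u j)) +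
      B * (a j * exp (-u j) * exp (-η * u j)) := fun j => by rw [hβ]; ring
  have hA : 0 ≤ A := by positivity
  refine (quad_le hκ hpos hs (fun j => H.kernel_sum_le hκ hM0 hM1 hη hη1 hT (H.le_u j))
    (by simp_rw [hcβ]; exact (hsd'.mul_left A).add (hs.mul_left B))).trans ?_
  simp_rw [hcβ]
  rw [(hsd'.mul_left A).tsum_add (hs.mul_left B), tsum_mul_left, tsum_mul_left]
  have h1 := mul_le_mul_of_nonneg_left htd hA
  have h2 : B * (∑' k, a k * exp (-u k) * exp (-η * u k)) ≤ M * ρ / T * (ρ + 2 * C) := by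
    have := mul_le_mul_of_nonneg_left hle (by positivity : 0 ≤ M * ρ / T)
    calc _ = M * ρ / T * (η * ∑' k, a k * exp (-u k) * exp (-η * u k)) := by
          simp only [B]; ring
      _ ≤ _ := this
  refine (add_le_add h1 h2).trans (le_of_eq ?_)
  simp only [A]
  field_simp
  ring

/-- The mean-square bound passes to the boundary line by continuity. -/
theorem boundary_le {G : ℂ → ℂ} (hG : ContinuousOn G {s : ℂ | 1 ≤ s.re ∧ s ≠ 1}) {T B : ℝ}
    (hT : 1 ≤ T) (h : ∀ η : ℝ, 0 < η → η ≤ 1 →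
      ∫ τ in (1 : ℝ)..2, ‖G (1 + η + (2 * π * T * τ : ℝ) * Complex.I)‖ ^ 2 ≤ B) :
    ∫ τ in (1 : ℝ)..2, ‖G (1 + (2 * π * T * τ : ℝ) * Complex.I)‖ ^ 2 ≤ B := by
  let Φ : ℝ × ℝ → ℂ := fun p => 1 + p.1 + (2 * π * T * p.2 : ℝ) * Complex.I
  have hΦ : Continuous Φ := by simp only [Φ]; fun_prop
  have hmaps : ∀ p ∈ Icc (0 : ℝ) 1 ×ˢ Icc (1 : ℝ) 2, Φ p ∈ {s : ℂ | 1 ≤ s.re ∧ s ≠ 1} := by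
    rintro ⟨η, τ⟩ ⟨h1, h2⟩
    have hp : 0 < 2 * π * T * τ := by
      have := pi_pos
      have : 0 < τ := by linarith [h2.1]
      positivity
    constructor
    · simpa [Φ] using h1.1
    · intro h3
      have h4 : (Φ (η, τ)).im = 2 * π * T * τ := by simp [Φ]
      rw [h3, Complex.one_im] at h4
      exact hp.ne h4
  have hc : ContinuousOn (fun p => ‖G (Φ p)‖ ^ 2) (Icc (0 : ℝ) 1 ×ˢ Icc (1 : ℝ) 2) :=
    ((hG.comp hΦ.continuousOn hmaps).norm).pow 2
  obtain ⟨K, hK⟩ := (isCompact_Icc.prod isCompact_Icc).exists_bound_of_continuousOn hc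
  have hIoc : uIoc (1 : ℝ) 2 ⊆ Icc 1 2 := by
    rw [uIoc_of_le (by norm_num)]; exact Ioc_subset_Icc_self
  have hev : ∀ᶠ η : ℝ in 𝓝[>] 0, η ∈ Ioc (0 : ℝ) 1 := Ioc_mem_nhdsGT one_pos
  have hlim : Tendsto (fun η : ℝ => ∫ τ in (1 : ℝ)..2, ‖G (Φ (η, τ))‖ ^ 2) (𝓝[>] 0)
      (𝓝 (∫ τ in (1 : ℝ)..2, ‖G (Φ (0, τ))‖ ^ 2)) := by
    refine intervalIntegral.tendsto_integral_filter_of_dominated_convergence (fun _ => K) ?_ ?_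
      intervalIntegrable_const ?_
    · filter_upwards [hev] with η hη
      refine ContinuousOn.aestronglyMeasurable (fun τ hτ => ?_) measurableSet_uIoc
      have h1 : ContinuousOn (fun τ : ℝ => ‖G (Φ (η, τ))‖ ^ 2) (Icc 1 2) :=
        hc.comp (by fun_prop) fun τ hτ => ⟨⟨hη.1.le, hη.2⟩, hτ⟩
      exact (h1.mono hIoc) τ hτ
    · filter_upwards [hev] with η hη
      exact Eventually.of_forall fun τ hτ => hK (η, τ) ⟨⟨hη.1.le, hη.2⟩, hIoc hτ⟩
    · refine Eventually.of_forall fun τ hτ => ?_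
      have h1 : ContinuousWithinAt (fun η : ℝ => ‖G (Φ (η, τ))‖ ^ 2) (Icc 0 1) 0 :=
        (hc.comp (f := fun η : ℝ => (η, τ)) (s := Icc (0 : ℝ) 1) (by fun_prop)
          fun η hη => ⟨hη, hIoc hτ⟩) 0 ⟨le_rfl, zero_le_one⟩
      refine h1.tendsto.mono_left (le_trans ?_ (nhdsWithin_mono 0 Ioc_subset_Icc_self))
      exact le_inf nhdsWithin_le_nhds (le_principal_iff.2 (Ioc_mem_nhdsGT one_pos))
  have h1 := le_of_tendsto hlim (hev.mono fun η hη => by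
    simpa [Φ] using h η hη.1 hη.2)
  simpa [Φ] using h1

/-! ### The tails of the given system -/

/-- The error term `x / (log x) ^ (3 / 2)` is increasing for `log x ≥ 3 / 2`. -/
theorem exp_mul_decay_mono {u v : ℝ} (hu : 3 / 2 ≤ u) (h : u ≤ v) :
    exp u * decay u ≤ exp v * decay v := by
  have hu0 : 0 < u := by linarith
  have hv0 : 0 < v := by linarith
  have h1 : v ≤ u * exp (2 / 3 * (v - u)) := by
    have := add_one_le_exp (2 / 3 * (v - u))
    nlinarith
  have h2 : v ^ (3 / 2 : ℝ) ≤ u ^ (3 / 2 : ℝ) * exp (v - u) := by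
    refine (Real.rpow_le_rpow hv0.le h1 (by norm_num)).trans (le_of_eq ?_)
    rw [Real.mul_rpow hu0.le (exp_pos _).le, ← Real.exp_mul]
    congr 2
    ring
  have hup : 0 < u ^ (3 / 2 : ℝ) := Real.rpow_pos_of_pos hu0 _
  have hvp : 0 < v ^ (3 / 2 : ℝ) := Real.rpow_pos_of_pos hv0 _
  unfold decay
  rw [Real.rpow_neg hu0.le, Real.rpow_neg hv0.le, ← div_eq_mul_inv, ← div_eq_mul_inv,
    div_le_div_iff₀ hup hvp]
  calc exp u * v ^ (3 / 2 : ℝ) ≤ exp u * (u ^ (3 / 2 : ℝ) * exp (v - u)) := by gcongr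
    _ = exp u * exp (v - u) * u ^ (3 / 2 : ℝ) := by ring
    _ = exp v * u ^ (3 / 2 : ℝ) := by rw [← exp_add]; congr 2; ring

/-- The tails of the given system satisfy `LogCount` with one constant `C` for all cut-offs `J`. -/
theorem exists_logCount {n a : ℕ → ℝ} {ρ ε : ℝ}
    (hn : StrictMono n) (hpos : ∀ j, 0 < n j) (hnt : Tendsto n atTop atTop)
    (ha : ∀ j, 0 < a j) (hρ : 0 < ρ) (hε : 0 < ε)
    (hA : (fun x : ℝ => (∑' j, if n j ≤ x then a j else 0) - ρ * x)
      =O[atTop] (fun x : ℝ => x / Real.log x ^ (3 / 2 + ε))) :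
    ∃ C : ℝ, ∃ J₀ : ℕ, ∀ J, J₀ ≤ J →
      LogCount (fun k => log (n (k + J))) (fun k => a (k + J)) ρ C := by
  obtain ⟨C₀, hC₀, hbig⟩ := hA.exists_pos
  obtain ⟨X₀, hX₀⟩ := eventually_atTop.1 hbig.bound
  let A : ℝ → ℝ := fun x => ∑' j, if n j ≤ x then a j else 0
  have hA1 : ∀ v, 3 / 2 ≤ v → X₀ ≤ exp v → |A (exp v) - ρ * exp v| ≤ C₀ * (exp v * decay v) := by
    intro v hv hX
    have hv0 : 0 < v := by linarith
    refine (hX₀ _ hX).trans ?_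
    rw [Real.log_exp, norm_div, Real.norm_eq_abs, abs_exp, Real.norm_eq_abs,
      abs_of_pos (Real.rpow_pos_of_pos hv0 _), div_eq_mul_inv, ← Real.rpow_neg hv0.le]
    have : v ^ (-(3 / 2 + ε)) ≤ decay v :=
      Real.rpow_le_rpow_of_exponent_le (by linarith) (by linarith)
    gcongr
  obtain ⟨j₁, hj₁⟩ := eventually_atTop.1 (hnt.eventually_ge_atTop (max X₀ (exp (3 / 2))))
  let e₀ : ℝ := exp (3 / 2) * decay (3 / 2)
  have he₀ : 0 < e₀ := mul_pos (exp_pos _) (decay_pos (by norm_num))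
  have he₀v : ∀ v, 3 / 2 ≤ v → 1 ≤ 1 / e₀ * (exp v * decay v) := fun v hv => by
    have := exp_mul_decay_mono le_rfl hv
    rw [one_div, inv_mul_eq_div, le_div_iff₀ he₀, one_mul]
    exact this
  -- One `C₀` for `A (e ^ v)`, another one for the subtracted partial sum, and `ρ / e₀` for the
  -- constant lost when `A` is evaluated slightly to the left of `n J`.
  refine ⟨2 * C₀ + ρ / e₀, j₁ + 1, fun J hJ => ?_⟩
  have hexpl : ∀ j, exp (log (n j)) = n j := fun j => exp_log (hpos j)
  have hJ1 : max X₀ (exp (3 / 2)) ≤ n (J - 1) := hj₁ _ (by omega)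
  have hlt : n (J - 1) < n J := hn (by omega)
  have hnJ : exp (3 / 2) ≤ n J := (le_max_right _ _).trans (hJ1.trans hlt.le)
  have hlogJ : 3 / 2 ≤ log (n J) := (le_log_iff_exp_le (hpos J)).2 hnJ
  have hsumm : ∀ x, Summable (fun j => if n j ≤ x then a j else 0) := fun x =>
    summable_count hnt x
  -- The partial sum `∑_{j < J} a j` is the value of `A` just below the jump at `n J`.
  have hS : |∑ j ∈ Finset.range J, a j - ρ * n J| ≤
      (C₀ + ρ / e₀) * (n J * decay (log (n J))) := by
    let y := max (n (J - 1)) (n J - 1)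
    have hy1 : y < n J := max_lt hlt (by linarith)
    have hy2 : n J - 1 ≤ y := le_max_right _ _
    have hy3 : n (J - 1) ≤ y := le_max_left _ _
    have hy0 : 0 < y := (hpos _).trans_le hy3
    have hye : exp (log y) = y := exp_log hy0
    have hAy : A y = ∑ j ∈ Finset.range J, a j := by
      simp only [A]
      rw [tsum_eq_sum (s := Finset.range J)]
      · refine Finset.sum_congr rfl fun j hj => ?_
        rw [if_pos]
        have : j ≤ J - 1 := by have := Finset.mem_range.1 hj; omega
        exact (hn.monotone this).trans hy3
      · intro j hj
        rw [if_neg]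
        have : J ≤ j := by simpa using hj
        exact not_le.2 (hy1.trans_le (hn.monotone this))
    have hly : 3 / 2 ≤ log y :=
      (le_log_iff_exp_le hy0).2 ((le_max_right _ _).trans (hJ1.trans hy3))
    have h1 := hA1 (log y) hly (by rw [hye]; exact (le_max_left _ _).trans (hJ1.trans hy3))
    rw [hye, hAy] at h1
    have h2 := exp_mul_decay_mono hly (log_le_log hy0 hy1.le)
    rw [hye, hexpl] at h2
    have h3 := he₀v _ hlogJ
    rw [hexpl] at h3
    have h4 : |ρ * y - ρ * n J| ≤ ρ := by
      rw [← mul_sub, abs_mul, abs_of_pos hρ]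
      refine mul_le_of_le_one_right hρ.le ?_
      rw [abs_le]; constructor <;> linarith
    calc |∑ j ∈ Finset.range J, a j - ρ * n J|
        ≤ |∑ j ∈ Finset.range J, a j - ρ * y| + |ρ * y - ρ * n J| := abs_sub_le _ _ _
      _ ≤ C₀ * (n J * decay (log (n J))) + ρ * (1 / e₀ * (n J * decay (log (n J)))) := by
          refine add_le_add (h1.trans (by gcongr)) (h4.trans ?_)
          exact le_mul_of_one_le_right hρ.le h3
      _ = _ := by ring
  refine ⟨?_, ?_, ?_, fun k => ha _, hρ, by positivity, ?_⟩
  · intro i j hij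
    exact log_lt_log (hpos _) (hn (by omega))
  · exact tendsto_log_atTop.comp (hnt.comp (tendsto_add_atTop_nat J))
  · simp only [zero_add]; linarith
  · intro v hv
    simp only [zero_add] at hv ⊢
    rw [hexpl]
    have hv32 : 3 / 2 ≤ v := hlogJ.trans hv
    have hnv : n J ≤ exp v := (log_le_iff_le_exp (hpos J)).1 hv
    have h1 := hA1 v hv32 ((le_max_left _ _).trans (hJ1.trans (hlt.le.trans hnv)))
    have h2 := exp_mul_decay_mono hlogJ hv
    rw [hexpl] at h2
    have h3 : count (fun k => log (n (k + J))) (fun k => a (k + J)) v =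
        A (exp v) - ∑ j ∈ Finset.range J, a j := by
      have h4 := (hsumm (exp v)).sum_add_tsum_nat_add J
      have h5 : ∑ j ∈ Finset.range J, (if n j ≤ exp v then a j else 0) =
          ∑ j ∈ Finset.range J, a j := by
        refine Finset.sum_congr rfl fun j hj => ?_
        rw [if_pos ((hn.monotone (Finset.mem_range.1 hj).le).trans hnv)]
      rw [h5] at h4
      have h6 : count (fun k => log (n (k + J))) (fun k => a (k + J)) v =
          ∑' k, if n (k + J) ≤ exp v then a (k + J) else 0 := by
        unfold count
        simp_rw [log_le_iff_le_exp (hpos _)]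
      rw [h6]
      simp only [A]
      linarith
    rw [h3]
    have h7 : A (exp v) - ∑ j ∈ Finset.range J, a j - ρ * (exp v - n J) =
        (A (exp v) - ρ * exp v) - (∑ j ∈ Finset.range J, a j - ρ * n J) := by ring
    rw [h7]
    calc _ ≤ |A (exp v) - ρ * exp v| + |∑ j ∈ Finset.range J, a j - ρ * n J| := abs_sub _ _
      _ ≤ C₀ * (exp v * decay v) + (C₀ + ρ / e₀) * (exp v * decay v) := by
          refine add_le_add h1 (hS.trans ?_)
          gcongr
      _ = _ := by ring

/-- The jump at the first frequency is part of the error term; applied to all tails, this bounds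
every single coefficient. -/
theorem LogCount.first_le {u a : ℕ → ℝ} {ρ C : ℝ} (H : LogCount u a ρ C) :
    a 0 ≤ C * (exp (u 0) * decay (u 0)) := by
  have h1 := H.bound (u 0) le_rfl
  rw [sub_self, mul_zero, sub_zero] at h1
  refine le_trans ?_ ((le_abs_self _).trans h1)
  have h2 := (summable_count (a := a) H.top (u 0)).le_tsum 0
    (fun k _ => by split_ifs; exacts [(H.pos k).le, le_rfl])
  unfold count
  simpa using h2

/-! ### Mean values -/

/-- Dyadic decomposition of a mean value. -/
theorem dyadic_le {h : ℝ → ℝ} (hc : ContinuousOn h (Ici 1)) {A X₁ : ℝ} (hA : 0 ≤ A) (hX₁ : 1 ≤ X₁)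
    (hd : ∀ X, X₁ ≤ X → ∫ t in X..(2 * X), h t ≤ A * X) (h0 : ∀ t, 0 ≤ h t) :
    ∀ X, X₁ ≤ X → ∫ t in X₁..X, h t ≤ 2 * A * X := by
  have hi : ∀ x y : ℝ, 1 ≤ x → 1 ≤ y → IntervalIntegrable h volume x y := fun x y hx hy =>
    (hc.mono fun t ht => (le_min hx hy).trans ht.1).intervalIntegrable
  have key : ∀ m : ℕ, ∀ X, X₁ ≤ X → X ≤ 2 ^ m * (2 * X₁) → ∫ t in X₁..X, h t ≤ 2 * A * X := by
    have base : ∀ X, X₁ ≤ X → X ≤ 2 * X₁ → ∫ t in X₁..X, h t ≤ 2 * A * X := by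
      intro X h1 h2
      have h3 := intervalIntegral.integral_mono_interval (μ := volume) le_rfl h1 h2
        (Eventually.of_forall h0) (hi X₁ (2 * X₁) hX₁ (by linarith))
      have h4 := hd X₁ le_rfl
      nlinarith [mul_nonneg hA (sub_nonneg.2 h1), mul_nonneg hA (by linarith : 0 ≤ X₁)]
    intro m
    induction m with
    | zero => intro X h1 h2; exact base X h1 (by simpa using h2)
    | succ m ih =>
      intro X h1 h2
      by_cases h3 : X ≤ 2 * X₁
      · exact base X h1 h3
      · have h4 : X₁ ≤ X / 2 := by linarith
        have h5 := ih (X / 2) h4 (by rw [pow_succ] at h2; linarith)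
        have h6 := hd (X / 2) h4
        rw [mul_div_cancel₀ X two_ne_zero] at h6
        rw [← intervalIntegral.integral_add_adjacent_intervals (hi X₁ (X / 2) hX₁ (by linarith))
          (hi (X / 2) X (by linarith) (by linarith))]
        nlinarith [mul_nonneg hA (by linarith : 0 ≤ X)]
  intro X hX
  obtain ⟨m, hm⟩ := pow_unbounded_of_one_lt X (one_lt_two)
  refine key m X hX (hm.le.trans ?_)
  have : (0 : ℝ) < 2 ^ m := by positivity
  nlinarith

/-- A dyadic bound gives a bound for the mean value; the initial segment of `[1, X]` is absorbed by
passing from `2 * A` to `3 * A`. -/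
theorem dyadic_mean_le {h : ℝ → ℝ} (hc : ContinuousOn h (Ici 1)) {A : ℝ} (hA : 0 < A)
    (hd : ∀ᶠ X in atTop, ∫ t in X..(2 * X), h t ≤ A * X) (h0 : ∀ t, 0 ≤ h t) :
    ∀ᶠ X in atTop, (1 / X) * ∫ t in (1 : ℝ)..X, h t ≤ 3 * A := by
  obtain ⟨X₂, hX₂⟩ := eventually_atTop.1 hd
  let X₁ := max X₂ 1
  have hX₁ : 1 ≤ X₁ := le_max_right _ _
  have hi : ∀ x y : ℝ, 1 ≤ x → 1 ≤ y → IntervalIntegrable h volume x y := fun x y hx hy =>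
    (hc.mono fun t ht => (le_min hx hy).trans ht.1).intervalIntegrable
  have h1 := dyadic_le hc hA.le hX₁ (fun X hX => hX₂ X ((le_max_left _ _).trans hX)) h0
  filter_upwards [eventually_ge_atTop X₁,
    eventually_ge_atTop ((∫ t in (1 : ℝ)..X₁, h t) / A)] with X hX hX'
  have hX0 : 0 < X := by linarith
  have h2 := h1 X hX
  rw [div_le_iff₀ hA] at hX'
  rw [one_div, inv_mul_le_iff₀ hX0, ← intervalIntegral.integral_add_adjacent_intervals
    (hi 1 X₁ le_rfl hX₁) (hi X₁ X hX₁ (by linarith))]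
  linarith

/-- The mean value of `cos (t θ)` over `[1, X]` tends to `1` or `0` according to `θ = 0` or not. -/
theorem tendsto_mean_cos (θ : ℝ) :
    Tendsto (fun X : ℝ => (1 / X) * ∫ t in (1 : ℝ)..X, cos (t * θ)) atTop
      (𝓝 (if θ = 0 then 1 else 0)) := by
  by_cases hθ : θ = 0
  · subst hθ
    simp only [mul_zero, cos_zero, if_true, intervalIntegral.integral_const, smul_eq_mul, mul_one]
    have h1 : Tendsto (fun X : ℝ => 1 - X⁻¹) atTop (𝓝 (1 - 0)) :=
      tendsto_const_nhds.sub tendsto_inv_atTop_zero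
    rw [sub_zero] at h1
    refine h1.congr' ?_
    filter_upwards [eventually_gt_atTop 0] with X hX
    field_simp
  · rw [if_neg hθ]
    have h1 : ∀ X : ℝ, ∫ t in (1 : ℝ)..X, cos (t * θ) = (sin (X * θ) - sin θ) / θ := fun X => by
      rw [intervalIntegral.integral_comp_mul_right _ hθ, integral_cos, one_mul, smul_eq_mul,
        inv_mul_eq_div]
    simp_rw [h1]
    refine squeeze_zero_norm' (a := fun X : ℝ => (2 / |θ|) * X⁻¹) ?_ ?_
    · filter_upwards [eventually_gt_atTop 0] with X hX
      rw [one_div, norm_mul, norm_div, Real.norm_eq_abs, Real.norm_eq_abs, Real.norm_eq_abs,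
        abs_of_pos (inv_pos.2 hX), mul_comm]
      have h2 : |sin (X * θ) - sin θ| ≤ 2 := by
        rw [abs_le]
        constructor <;> linarith [neg_one_le_sin (X * θ), sin_le_one (X * θ),
          neg_one_le_sin θ, sin_le_one θ]
      gcongr
    · simpa using tendsto_inv_atTop_zero.const_mul (2 / |θ|)

/-- Mean square of a finite exponential sum with distinct frequencies. -/
theorem tendsto_mean_poly {c u : ℕ → ℝ} (hu : Function.Injective u) (J : ℕ) :
    Tendsto (fun X : ℝ => (1 / X) * ∫ t in (1 : ℝ)..X,
      ‖∑ k ∈ Finset.range J, (c k : ℂ) * Complex.exp (-(t * u k : ℝ) * Complex.I)‖ ^ 2) atTop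
      (𝓝 (∑ k ∈ Finset.range J, c k ^ 2)) := by
  have hsq : ∀ t : ℝ,
      ‖∑ k ∈ Finset.range J, (c k : ℂ) * Complex.exp (-(t * u k : ℝ) * Complex.I)‖ ^ 2 =
      ∑ j ∈ Finset.range J, ∑ k ∈ Finset.range J, c j * c k * cos (t * (u j - u k)) := by
    intro t
    rw [← Complex.normSq_eq_norm_sq, Complex.normSq_apply, Complex.re_sum, Complex.im_sum]
    have hre : ∀ k, ((c k : ℂ) * Complex.exp (-(t * u k : ℝ) * Complex.I)).re =
        c k * cos (t * u k) := fun k => by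
      rw [Complex.re_ofReal_mul, ← Complex.ofReal_neg, Complex.exp_ofReal_mul_I_re, cos_neg]
    have him : ∀ k, ((c k : ℂ) * Complex.exp (-(t * u k : ℝ) * Complex.I)).im =
        -(c k * sin (t * u k)) := fun k => by
      rw [Complex.im_ofReal_mul, ← Complex.ofReal_neg, Complex.exp_ofReal_mul_I_im, sin_neg]
      ring
    simp_rw [hre, him]
    rw [Finset.sum_mul_sum, Finset.sum_mul_sum, ← Finset.sum_add_distrib]
    refine Finset.sum_congr rfl fun j _ => ?_
    rw [← Finset.sum_add_distrib]
    refine Finset.sum_congr rfl fun k _ => ?_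
    rw [mul_sub, cos_sub]
    ring
  have hint : ∀ X : ℝ, (1 / X) * ∫ t in (1 : ℝ)..X,
      ‖∑ k ∈ Finset.range J, (c k : ℂ) * Complex.exp (-(t * u k : ℝ) * Complex.I)‖ ^ 2 =
      ∑ j ∈ Finset.range J, ∑ k ∈ Finset.range J,
        c j * c k * ((1 / X) * ∫ t in (1 : ℝ)..X, cos (t * (u j - u k))) := by
    intro X
    simp_rw [hsq]
    rw [intervalIntegral.integral_finsetSum fun j _ => Continuous.intervalIntegrable
      (by fun_prop) _ _, Finset.mul_sum]
    refine Finset.sum_congr rfl fun j _ => ?_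
    rw [intervalIntegral.integral_finsetSum fun k _ => Continuous.intervalIntegrable
      (by fun_prop) _ _, Finset.mul_sum]
    refine Finset.sum_congr rfl fun k _ => ?_
    rw [intervalIntegral.integral_const_mul]
    ring
  simp_rw [hint]
  have hlim : ∑ k ∈ Finset.range J, c k ^ 2 = ∑ j ∈ Finset.range J, ∑ k ∈ Finset.range J,
      c j * c k * (if u j - u k = 0 then 1 else 0) := by
    refine Finset.sum_congr rfl fun j hj => ?_
    rw [Finset.sum_eq_single_of_mem j hj]
    · simp [sq]
    · intro k _ hk
      rw [if_neg, mul_zero]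
      intro h
      exact hk (hu (by linarith))
  rw [hlim]
  exact tendsto_finsetSum _ fun j _ => tendsto_finsetSum _ fun k _ =>
    (tendsto_mean_cos _).const_mul _

/-- Cauchy-Schwarz with a weight `θ`, so that only `‖g‖` needs to be small. -/
theorem abs_norm_sq_add_sub_le (p g : ℂ) {θ : ℝ} (hθ : 0 < θ) :
    |‖p + g‖ ^ 2 - ‖p‖ ^ 2| ≤ θ * ‖p‖ ^ 2 + (1 + 1 / θ) * ‖g‖ ^ 2 := by
  have h1 := norm_add_le p g
  have h2 : ‖p‖ - ‖g‖ ≤ ‖p + g‖ := by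
    have := norm_sub_norm_le p (-g); rwa [norm_neg, sub_neg_eq_add] at this
  have h3 : 2 * (‖p‖ * ‖g‖) ≤ θ * ‖p‖ ^ 2 + 1 / θ * ‖g‖ ^ 2 := by
    have h4 : 0 ≤ θ * (‖p‖ - ‖g‖ / θ) ^ 2 := by positivity
    have h5 : θ * (‖p‖ - ‖g‖ / θ) ^ 2 =
        θ * ‖p‖ ^ 2 + 1 / θ * ‖g‖ ^ 2 - 2 * (‖p‖ * ‖g‖) := by field_simp; ring
    linarith
  have h6 : |‖p + g‖ - ‖p‖| ≤ ‖g‖ := abs_le.2 ⟨by linarith, by linarith⟩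
  have h7 : |‖p + g‖ ^ 2 - ‖p‖ ^ 2| = |‖p + g‖ - ‖p‖| * (‖p + g‖ + ‖p‖) := by
    have h : ‖p + g‖ ^ 2 - ‖p‖ ^ 2 = (‖p + g‖ - ‖p‖) * (‖p + g‖ + ‖p‖) := by ring
    rw [h, abs_mul, abs_of_nonneg (by positivity : 0 ≤ ‖p + g‖ + ‖p‖)]
  have h8 : |‖p + g‖ - ‖p‖| * (‖p + g‖ + ‖p‖) ≤ ‖g‖ * ((‖p‖ + ‖g‖) + ‖p‖) := by gcongr
  rw [h7]
  nlinarith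

/-- Besicovitch-type approximation: if `f = P J + G J` and the mean squares of `G J` become small,
the mean square of `f` is the limit of those of `P J`. -/
theorem tendsto_mean_of_approx {f : ℝ → ℂ} {P G : ℕ → ℝ → ℂ} {S : ℕ → ℝ} {L : ℝ}
    (hf : ContinuousOn f (Ici 1)) (hP : ∀ J, ContinuousOn (P J) (Ici 1))
    (hfPG : ∀ J, ∀ t, f t = P J t + G J t)
    (hPm : ∀ J, Tendsto (fun X : ℝ => (1 / X) * ∫ t in (1 : ℝ)..X, ‖P J t‖ ^ 2) atTop (𝓝 (S J)))
    (hS : Tendsto S atTop (𝓝 L)) (hL : 0 ≤ L)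
    (hG : ∀ δ : ℝ, 0 < δ → ∀ᶠ J in atTop, ∀ᶠ X : ℝ in atTop,
      (1 / X) * ∫ t in (1 : ℝ)..X, ‖G J t‖ ^ 2 ≤ δ) :
    Tendsto (fun X : ℝ => (1 / X) * ∫ t in (1 : ℝ)..X, ‖f t‖ ^ 2) atTop (𝓝 L) := by
  rw [Metric.tendsto_nhds]
  intro e he
  let θ := e / (8 * (L + 2))
  have hθ : 0 < θ := by positivity
  let δ := e / (8 * (1 + 1 / θ))
  have hδ : 0 < δ := by positivity
  have hS' := (Metric.tendsto_nhds.1 hS) (min 1 (e / 4)) (by positivity)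
  obtain ⟨J, hJG, hJS⟩ := ((hG δ hδ).and hS').exists
  filter_upwards [hJG, (Metric.tendsto_nhds.1 (hPm J)) (min 1 (e / 4)) (by positivity),
    eventually_ge_atTop 1] with X hX1 hX2 hX
  rw [Real.dist_eq] at hX2 hJS ⊢
  have hGc : ContinuousOn (G J) (Ici 1) := (hf.sub (hP J)).congr fun t _ => by
    rw [Pi.sub_apply, hfPG J]; ring
  have hi : ∀ g : ℝ → ℂ, ContinuousOn g (Ici 1) →
      IntervalIntegrable (fun t => ‖g t‖ ^ 2) volume 1 X := fun g hg =>
    ((hg.norm.pow 2).mono fun t ht => by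
      rw [uIcc_of_le hX] at ht; exact ht.1).intervalIntegrable
  have hX0 : 0 < X := by linarith
  have hdiff : |(1 / X) * (∫ t in (1 : ℝ)..X, ‖f t‖ ^ 2) -
      (1 / X) * ∫ t in (1 : ℝ)..X, ‖P J t‖ ^ 2| ≤
      θ * ((1 / X) * ∫ t in (1 : ℝ)..X, ‖P J t‖ ^ 2) +
      (1 + 1 / θ) * ((1 / X) * ∫ t in (1 : ℝ)..X, ‖G J t‖ ^ 2) := by
    rw [← mul_sub, ← intervalIntegral.integral_sub (hi _ hf) (hi _ (hP J)), abs_mul,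
      abs_of_pos (by positivity : 0 < 1 / X)]
    have h1 : |∫ t in (1 : ℝ)..X, (‖f t‖ ^ 2 - ‖P J t‖ ^ 2)| ≤
        ∫ t in (1 : ℝ)..X, (θ * ‖P J t‖ ^ 2 + (1 + 1 / θ) * ‖G J t‖ ^ 2) := by
      have hle : ∀ t, ‖‖f t‖ ^ 2 - ‖P J t‖ ^ 2‖ ≤
          θ * ‖P J t‖ ^ 2 + (1 + 1 / θ) * ‖G J t‖ ^ 2 := fun t => by
        rw [Real.norm_eq_abs, hfPG J t]
        exact abs_norm_sq_add_sub_le _ _ hθ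
      rw [← Real.norm_eq_abs]
      exact intervalIntegral.norm_integral_le_of_norm_le hX
        (Eventually.of_forall fun t _ => hle t)
        (((hi _ (hP J)).const_mul _).add ((hi _ hGc).const_mul _))
    rw [intervalIntegral.integral_add ((hi _ (hP J)).const_mul _) ((hi _ hGc).const_mul _),
      intervalIntegral.integral_const_mul, intervalIntegral.integral_const_mul] at h1
    have h2 := mul_le_mul_of_nonneg_left h1 (by positivity : 0 ≤ 1 / X)
    linarith
  have hm1 : min 1 (e / 4) ≤ 1 := min_le_left _ _
  have hm2 : min 1 (e / 4) ≤ e / 4 := min_le_right _ _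
  have hPle : (1 / X) * ∫ t in (1 : ℝ)..X, ‖P J t‖ ^ 2 ≤ L + 2 := by
    have h1 := (abs_lt.1 hX2).2
    have h2 := (abs_lt.1 hJS).2
    linarith
  have h3 : θ * ((1 / X) * ∫ t in (1 : ℝ)..X, ‖P J t‖ ^ 2) ≤ e / 8 := by
    calc _ ≤ θ * (L + 2) := by gcongr
      _ = e / 8 := by simp only [θ]; field_simp
  have h4 : (1 + 1 / θ) * ((1 / X) * ∫ t in (1 : ℝ)..X, ‖G J t‖ ^ 2) ≤ e / 8 := by
    calc _ ≤ (1 + 1 / θ) * δ := by gcongr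
      _ = e / 8 := by simp only [δ]; field_simp
  rw [abs_lt] at hX2 hJS ⊢
  rw [abs_le] at hdiff
  constructor <;> linarith [hX2.1, hX2.2, hJS.1, hJS.2, hdiff.1, hdiff.2]

/-! ### The tails on the boundary line -/

theorem div_cpow_eq {a n : ℝ} (hn : 0 < n) (η x : ℝ) :
    (a : ℂ) / (n : ℂ) ^ (1 + η + (x : ℂ) * Complex.I) =
      ((a * exp (-log n) * exp (-η * log n) : ℝ) : ℂ) *
        Complex.exp (-(x * log n : ℝ) * Complex.I) := by
  rw [Complex.cpow_def_of_ne_zero (by exact_mod_cast hn.ne'), ← Complex.ofReal_log hn.le,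
    div_eq_mul_inv, ← Complex.exp_neg]
  push_cast
  rw [mul_assoc, mul_assoc, ← Complex.exp_add, ← Complex.exp_add]
  congr 2
  ring

theorem exp_neg_log_eq {a n : ℝ} (hn : 0 < n) : a * exp (-log n) = a / n := by
  rw [exp_neg, exp_log hn, div_eq_mul_inv]

/-- The analytic tail `F - ∑_{k < J}`, to the right of the boundary line, as an exponential sum. -/
theorem tail_eq {n a : ℕ → ℝ} {ρ C : ℝ} {F : ℂ → ℂ} (hpos : ∀ j, 0 < n j) {J : ℕ}
    (hF : ∀ s : ℂ, 1 < s.re → F s = ∑' j, (a j : ℂ) / (n j : ℂ) ^ s)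
    (H : LogCount (fun k => log (n (k + J))) (fun k => a (k + J)) ρ C)
    {η : ℝ} (hη : 0 < η) (hη1 : η ≤ 1) (x : ℝ) :
    F (1 + η + (x : ℂ) * Complex.I) - ∑ k ∈ Finset.range J,
        (a k : ℂ) / (n k : ℂ) ^ (1 + η + (x : ℂ) * Complex.I) =
      ∑' k, ((a (k + J) * exp (-log (n (k + J))) * exp (-η * log (n (k + J))) : ℝ) : ℂ) *
        Complex.exp (-(x * log (n (k + J)) : ℝ) * Complex.I) := by
  have hs : Summable fun k => a (k + J) * exp (-log (n (k + J))) * exp (-η * log (n (k + J))) :=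
    (H.summable_exp hη hη1).1
  have h1 : Summable fun k =>
      (a (k + J) : ℂ) / (n (k + J) : ℂ) ^ (1 + η + (x : ℂ) * Complex.I) := by
    simp_rw [div_cpow_eq (hpos _)]
    refine Summable.of_norm_bounded hs fun k => ?_
    rw [norm_mul, ← Complex.ofReal_neg, Complex.norm_exp_ofReal_mul_I, mul_one, Complex.norm_real,
      Real.norm_eq_abs, abs_of_nonneg]
    exact mul_nonneg (mul_nonneg (H.pos k).le (exp_pos _).le) (exp_pos _).le
  have h0 : Summable fun k => (a k : ℂ) / (n k : ℂ) ^ (1 + η + (x : ℂ) * Complex.I) :=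
    (summable_nat_add_iff (f := fun k => (a k : ℂ) / (n k : ℂ) ^ (1 + η + (x : ℂ) * Complex.I))
      J).1 h1
  have h2 := h0.sum_add_tsum_nat_add J
  have h3 : F (1 + η + (x : ℂ) * Complex.I) =
      ∑' j, (a j : ℂ) / (n j : ℂ) ^ (1 + η + (x : ℂ) * Complex.I) := hF _ (by simpa using hη)
  rw [h3, ← h2, add_sub_cancel_left]
  exact tsum_congr fun k => div_cpow_eq (hpos _) η x

theorem continuousOn_tail {n a : ℕ → ℝ} {F : ℂ → ℂ} (hpos : ∀ j, 0 < n j)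
    (hFc : ContinuousOn F {s : ℂ | 1 ≤ s.re ∧ s ≠ 1}) (J : ℕ) :
    ContinuousOn (fun s => F s - ∑ k ∈ Finset.range J, (a k : ℂ) / (n k : ℂ) ^ s)
      {s : ℂ | 1 ≤ s.re ∧ s ≠ 1} := by
  refine hFc.sub (Continuous.continuousOn (continuous_finsetSum _ fun k _ => ?_))
  have h : (n k : ℂ) ≠ 0 := by exact_mod_cast (hpos k).ne'
  refine continuous_const.div (continuous_id.const_cpow (Or.inl h)) fun s => ?_
  simp [Complex.cpow_eq_zero_iff, h]

/-- The mean square over `[X, 2 X]` of the `J`-th tail on the boundary line: apart from a constant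
depending on `J` it is `X` times a quantity that tends to `0` with `J`. -/
theorem tail_mean_square {n a : ℕ → ℝ} {ρ C M : ℝ} {F : ℂ → ℂ} {w : ℝ → ℝ} {κ κ' : ℝ → ℂ}
    (hκ : Kern w κ κ') (hpos : ∀ j, 0 < n j)
    (hFc : ContinuousOn F {s : ℂ | 1 ≤ s.re ∧ s ≠ 1})
    (hF : ∀ s : ℂ, 1 < s.re → F s = ∑' j, (a j : ℂ) / (n j : ℂ) ^ s)
    (hM0 : ∫ x, ‖κ x‖ * (1 + |x|) ^ 2 ≤ M) (hM1 : ∫ x, ‖κ' x‖ * (1 + |x|) ^ 2 ≤ M) {J : ℕ}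
    (H : LogCount (fun k => log (n (k + J))) (fun k => a (k + J)) ρ C) :
    ∃ K : ℝ, ∀ X : ℝ, 2 * π ≤ X → ∫ t in X..(2 * X),
      ‖F (1 + (t : ℂ) * Complex.I) - ∑ k ∈ Finset.range J,
        (a k : ℂ) / (n k : ℂ) ^ (1 + (t : ℂ) * Complex.I)‖ ^ 2 ≤
      M * (3 * C * ∑' k, a (k + J) * exp (-log (n (k + J))) * decay (log (n (k + J)))) * X + K := by
  set δ := ∑' k, a (k + J) * exp (-log (n (k + J))) * decay (log (n (k + J))) with hδ
  refine ⟨2 * π * (M * (ρ * (ρ + 2 * C) + ρ * δ / decay (log (n (0 + J))))), fun X hX => ?_⟩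
  have hπ := pi_pos
  have hX0 : 0 < X := by linarith
  -- The substitution `t = X τ` with `X = 2 π T` turns `[X, 2 X]` into `[1, 2]`.
  set T := X / (2 * π) with hT
  have hT1 : 1 ≤ T := by rw [hT, le_div_iff₀ (by positivity), one_mul]; exact hX
  have hT0 : 0 < T := by linarith
  have hXT : X = 2 * π * T := by rw [hT]; field_simp
  have h1 := boundary_le (continuousOn_tail (a := a) hpos hFc J) hT1
    (B := M * (3 * C * δ + ρ * (ρ + 2 * C) / T + ρ * δ / (decay (log (n (0 + J))) * T)))
    (fun η hη hη1 => by
      have h2 := H.mean_square_le hκ hM0 hM1 hη hη1 hT1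
      refine le_trans (le_of_eq ?_) h2
      refine intervalIntegral.integral_congr fun τ _ => ?_
      rw [tail_eq hpos hF H hη hη1]
      congr 2
      refine tsum_congr fun k => ?_
      congr 4
      ring_nf)
  have h3 := intervalIntegral.smul_integral_comp_mul_left (a := 1) (b := 2)
    (fun t : ℝ => ‖F (1 + (t : ℂ) * Complex.I) - ∑ k ∈ Finset.range J,
        (a k : ℂ) / (n k : ℂ) ^ (1 + (t : ℂ) * Complex.I)‖ ^ 2) X
  rw [mul_one, mul_comm X 2] at h3
  rw [← h3, smul_eq_mul]
  have hd : decay (log (n (0 + J))) ≠ 0 := (decay_pos (zero_lt_one.trans_le H.one_le)).ne'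
  calc _ ≤ X * (M * (3 * C * δ + ρ * (ρ + 2 * C) / T + ρ * δ / (decay (log (n (0 + J))) * T))) := by
        refine mul_le_mul_of_nonneg_left ?_ hX0.le
        rw [← hXT] at h1
        exact h1
    _ = _ := by
        rw [hXT]; field_simp; ring

theorem continuousOn_line {G : ℂ → ℂ} (hG : ContinuousOn G {s : ℂ | 1 ≤ s.re ∧ s ≠ 1}) :
    ContinuousOn (fun t : ℝ => G (1 + (t : ℂ) * Complex.I)) (Ici 1) := by
  refine hG.comp (Continuous.continuousOn (by fun_prop)) fun t ht => ?_
  refine ⟨by simp, fun h => ?_⟩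
  have h1 := congrArg Complex.im h
  simp at h1
  have : (1 : ℝ) ≤ t := ht
  linarith

end

/-- Proposition 2 of the paper: under
`∑_{n j ≤ x} a j = ρ x + O(x/(log x)^(3/2+ε))`, the second moment of the
continuous extension `F` of `f(s) = ∑ a j / n j ^ s` on the 1-line exists:
`lim_{T→∞} (1/T)∫_1^T |f(1+it)|² dt = ∑ j a j²/n j²`, and the series converges. -/
theorem stmt_11
    (n a : ℕ → ℝ) (ρ ε : ℝ) (F : ℂ → ℂ)
    (hn : StrictMono n) (hpos : ∀ j, 0 < n j) (hnt : Tendsto n atTop atTop)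
    (ha : ∀ j, 0 < a j) (hρ : 0 < ρ) (hε : 0 < ε)
    (hA : (fun x : ℝ => (∑' j, if n j ≤ x then a j else 0) - ρ * x)
      =O[atTop] (fun x : ℝ => x / Real.log x ^ (3 / 2 + ε)))
    (hFc : ContinuousOn F {s : ℂ | 1 ≤ s.re ∧ s ≠ 1})
    (hF : ∀ s : ℂ, 1 < s.re → F s = ∑' j, (a j : ℂ) / (n j : ℂ) ^ s) :
    Tendsto (fun T : ℝ => (1 / T) * ∫ t in (1:ℝ)..T, ‖F (1 + t * Complex.I)‖ ^ 2)
        atTop (nhds (∑' j, a j ^ 2 / n j ^ 2)) ∧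
      Summable (fun j => a j ^ 2 / n j ^ 2) := by
  obtain ⟨C, J₀, hH⟩ := exists_logCount hn hpos hnt ha hρ hε hA
  obtain ⟨w, κ, κ', hκ⟩ := exists_kern
  have hC : 0 ≤ C := (hH J₀ le_rfl).C_nonneg
  let g : ℕ → ℝ := fun k => a k * Real.exp (-Real.log (n k)) * decay (Real.log (n k))
  have hg : Summable g := (summable_nat_add_iff J₀).1 (hH J₀ le_rfl).summable_decay
  have hsum : Summable (fun j => a j ^ 2 / n j ^ 2) := by
    refine (summable_nat_add_iff J₀).1 (Summable.of_nonneg_of_le (fun k => by positivity)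
      (fun k => ?_) (((summable_nat_add_iff J₀).2 hg).mul_left C))
    -- A coefficient `a k` is at most `C * n k * decay (log (n k))`; this replaces one factor of
    -- `a k ^ 2`.
    have h1 := (hH (k + J₀) (by omega)).first_le
    simp only [zero_add] at h1
    have hnk := hpos (k + J₀)
    rw [Real.exp_log hnk] at h1
    simp only [g]
    rw [exp_neg_log_eq hnk, div_le_iff₀ (by positivity)]
    calc a (k + J₀) ^ 2 = a (k + J₀) * a (k + J₀) := sq _
      _ ≤ a (k + J₀) * (C * (n (k + J₀) * decay (Real.log (n (k + J₀))))) :=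
          mul_le_mul_of_nonneg_left h1 (ha _).le
      _ = _ := by field_simp
  refine ⟨?_, hsum⟩
  let M : ℝ := max 1 (max (∫ x, ‖κ x‖ * (1 + |x|) ^ 2) (∫ x, ‖κ' x‖ * (1 + |x|) ^ 2))
  have hM : 1 ≤ M := le_max_left _ _
  let P : ℕ → ℝ → ℂ := fun J t => ∑ k ∈ Finset.range J,
    ((a k / n k : ℝ) : ℂ) * Complex.exp (-(t * Real.log (n k) : ℝ) * Complex.I)
  have hP : ∀ J, ∀ t : ℝ, ∑ k ∈ Finset.range J, (a k : ℂ) / (n k : ℂ) ^ (1 + (t : ℂ) * Complex.I) =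
      P J t := fun J t => Finset.sum_congr rfl fun k _ => by
    have h := div_cpow_eq (a := a k) (hpos k) 0 t
    rw [neg_zero, zero_mul, Real.exp_zero, mul_one, exp_neg_log_eq (hpos k), Complex.ofReal_zero,
      add_zero] at h
    exact h
  refine tendsto_mean_of_approx (P := P) (G := fun J t => F (1 + (t : ℂ) * Complex.I) - P J t)
    (S := fun J => ∑ k ∈ Finset.range J, (a k / n k) ^ 2) (continuousOn_line hFc)
    (fun J => Continuous.continuousOn (by fun_prop)) (fun J t => (add_sub_cancel _ _).symm)
    (fun J => tendsto_mean_poly (c := fun k => a k / n k) (u := fun k => Real.log (n k))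
      (fun i j h => hn.injective (Real.log_injOn_pos (hpos i) (hpos j) h)) J)
    (by simp_rw [div_pow]; exact hsum.hasSum.tendsto_sum_nat)
    (tsum_nonneg fun k => by positivity) ?_
  intro δ hδ
  have hlim : Tendsto (fun J => M * (3 * C * ∑' k, g (k + J))) atTop (nhds 0) := by
    simpa using ((tendsto_sum_nat_add g).const_mul (3 * C)).const_mul M
  filter_upwards [eventually_ge_atTop J₀, hlim.eventually_lt_const (u := δ / 6) (by linarith)]
    with J hJ hJδ
  obtain ⟨K, hK⟩ := tail_mean_square hκ hpos hFc hF
    ((le_max_left _ _).trans (le_max_right 1 _) : _ ≤ M)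
    ((le_max_right _ _).trans (le_max_right 1 _) : _ ≤ M) (hH J hJ)
  simp_rw [hP] at hK
  have hc := continuousOn_line (continuousOn_tail (a := a) hpos hFc J)
  simp_rw [hP] at hc
  have h3 : 3 * (δ / 3) = δ := by ring
  rw [← h3]
  refine dyadic_mean_le (h := fun t => ‖F (1 + (t : ℂ) * Complex.I) - P J t‖ ^ 2)
    (hc.norm.pow 2) (by linarith) ?_ (fun t => by positivity)
  filter_upwards [eventually_ge_atTop (2 * Real.pi), eventually_ge_atTop (6 * K / δ)] with X hX hX2
  have h4 := hK X hX
  rw [div_le_iff₀ hδ] at hX2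
  have hX0 : 0 ≤ X := by linarith [Real.pi_pos]
  have h5 := mul_le_mul_of_nonneg_right hJδ.le hX0
  simp only [g] at h5
  linarith
end
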